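/- Let a be a ribbon with n ≥ 4 nodes, all of which are positive. Then β(a) = δ(a): every extension of a attains at least δ(a) distinct values on its critical set in the open unit disk, and some extension of a attains exactly δ(a) distinct critical values. -/

import Mathlib

open scoped RealInnerProductSpace

noncomputable section

abbrev E2 : Type := EuclideanSpace ℝ (Fin 2)

/-- The point (cos t, sin t) on the unit circle in ℝ². -/
def sphPt (t : ℝ) : E2 := (EuclideanSpace.equiv (Fin 2) ℝ).symm ![Real.cos t, Real.sin t]

/-- A ribbon with `n` nodes, encoded via the angle parametrization `g = φ ∘ (cos, sin)`
of a C^∞ function `φ : S¹ → ℝ` whose critical points on the circle are exactly the `n`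
nondegenerate local extrema (nodes) at angles `θ 0 < θ 1 < ⋯ < θ (n-1)` in `[0, 2π)`,
with pairwise distinct critical values, together with a marking `ν` of the nodes by `±1`. -/
structure Ribbon (n : ℕ) : Type where
  g : ℝ → ℝ
  θ : Fin n → ℝ
  ν : Fin n → ℤ
  n_even : Even n
  n_pos : 0 < n
  smooth_g : ContDiff ℝ (⊤ : ℕ∞) g
  periodic_g : Function.Periodic g (2 * Real.pi)
  theta_mem : ∀ i, θ i ∈ Set.Ico (0 : ℝ) (2 * Real.pi)
  theta_mono : StrictMono θ
  node_crit : ∀ i, deriv g (θ i) = 0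
  node_nondeg : ∀ i, deriv (deriv g) (θ i) ≠ 0
  crit_only : ∀ t ∈ Set.Ico (0 : ℝ) (2 * Real.pi), deriv g t = 0 → ∃ i, t = θ i
  values_distinct : ∀ i j, g (θ i) = g (θ j) → i = j
  nu_sign : ∀ i, ν i = 1 ∨ ν i = -1

/-- The signature σ = s₊ − s₋ of a ribbon. -/
def Ribbon.sigma {n : ℕ} (a : Ribbon n) : ℤ := ∑ i, a.ν i

/-- Critical points of `f` in the open unit disk. -/
def critPts (f : E2 → ℝ) : Set E2 :=
  {x | x ∈ Metric.ball (0 : E2) 1 ∧ fderiv ℝ f x = 0}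

/-- `f : ℝ² → ℝ` is an extension of the ribbon `a`: it is C^∞, agrees with `φ` on the unit
circle, has nowhere-vanishing gradient on the circle, and at each node the radial derivative
`⟪∇f(p), p⟫` has sign `ν p` if `p` is a local maximum of `φ` (second derivative of `g`
negative there) and sign `−ν p` if `p` is a local minimum of `φ`. -/
def IsExtension {n : ℕ} (a : Ribbon n) (f : E2 → ℝ) : Prop :=
  ContDiff ℝ (⊤ : ℕ∞) f ∧
  (∀ t : ℝ, f (sphPt t) = a.g t) ∧
  (∀ x ∈ Metric.sphere (0 : E2) 1, fderiv ℝ f x ≠ 0) ∧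
  (∀ i : Fin n,
    (deriv (deriv a.g) (a.θ i) < 0 →
      0 < (a.ν i : ℝ) * ⟪gradient f (sphPt (a.θ i)), sphPt (a.θ i)⟫) ∧
    (0 < deriv (deriv a.g) (a.θ i) →
      (a.ν i : ℝ) * ⟪gradient f (sphPt (a.θ i)), sphPt (a.θ i)⟫ < 0))

/-- The ribbon invariant γ: the infimum, over all extensions `f` of `a`, of the number of
critical points of `f` in the open unit disk (a value in `ℕ∞`). -/
def gammaR {n : ℕ} (a : Ribbon n) : ℕ∞ :=
  sInf {k : ℕ∞ | ∃ f : E2 → ℝ, IsExtension a f ∧ (critPts f).encard = k}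

/-- The cyclically next node index. -/
def Ribbon.next {n : ℕ} (a : Ribbon n) (i : Fin n) : Fin n :=
  ⟨((i : ℕ) + 1) % n, Nat.mod_lt _ a.n_pos⟩

/-- The cluster number δ(a): the least cardinality of a finite subset of ℝ meeting, for
every `i`, the closed interval with endpoints `l i = φ (p i)` and `l (i+1)` (cyclically). -/
def clusterNumber {n : ℕ} (a : Ribbon n) : ℕ :=
  sInf {k : ℕ | ∃ A : Finset ℝ, A.card = k ∧
    ∀ i : Fin n, ∃ x ∈ A, x ∈ Set.uIcc (a.g (a.θ i)) (a.g (a.θ (a.next i)))}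

/-- β(a): the infimum, over all extensions `f` of `a`, of the number of distinct values taken
by `f` on the set of its critical points in the open unit disk. -/
def betaR {n : ℕ} (a : Ribbon n) : ℕ∞ :=
  sInf {k : ℕ∞ | ∃ f : E2 → ℝ, IsExtension a f ∧ (f '' critPts f).encard = k}

/-!
Since all nodes are positive, `f` decreases towards each minimum node along the radius, so every
minimum node is a strict local minimum of `f` on the closed disc, whereas no other point of the
boundary obstructs the gradient flow into the disc. Just below the level of a maximum node the
two adjacent minima lie in the same component of the sublevel set. As the higher one starts out as
a component of its own, a mountain pass, which must be a critical point in the open disc, occurs at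
a level between the two nodes. Hence the critical values meet every interval `[l_i, l_{i+1}]`.

Conversely, move a minimal cluster off the levels of the nodes. There is a smooth function `h` on
the circle with critical values in the cluster that is below `φ` at its maxima, above `φ` at its
minima and monotone in the same direction as `φ` in between. Interpolating along the radius from a
constant of the cluster to `h` and from there to `φ` gives an extension all of whose critical values
lie in the cluster.
-/

open Set Filter Topology

section MountainPass

variable {X : Type*} [TopologicalSpace X] {f : X → ℝ} {p s x : X} {c M : ℝ}

/-- `x` is a strict local minimum of `f`: nearby points other than `x` have larger values. -/
def IsStrictLocalMin (f : X → ℝ) (x : X) : Prop :=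
  ∀ᶠ y in 𝓝[≠] x, f x < f y

/-- Crossing the level of `f` at `x` does not merge different path components of the sublevel sets
near `x`: the part of the open sublevel set `{f < f x}` near `x` lies in a single path component of
it (the one of `w`, which need not be near `x`), and its closure fills up the nearby level set. This
is the form in which the mountain pass argument uses that `x` is a noncritical point. -/
def IsPassable (f : X → ℝ) (x : X) : Prop :=
  ∃ w, ∀ᶠ y in 𝓝 x, (f y = f x → y ∈ closure {z | f z < f x}) ∧
    (f y < f x → JoinedIn {z | f z < f x} y w)

lemma inter_frontier_nonempty_of_isPreconnected {S O : Set X} (hS : IsPreconnected S)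
    (hO : IsOpen O) (hp : p ∈ S ∩ O) (hs : s ∈ S \ O) : (S ∩ frontier O).Nonempty := by
  by_contra hempty
  have hdisj : Disjoint (frontier O) S := by
    rwa [disjoint_comm, Set.disjoint_iff_inter_eq_empty, ← Set.not_nonempty_iff_eq_empty]
  have : PreconnectedSpace S := Subtype.preconnectedSpace hS
  have huniv := (isClopen_preimage_val hO hdisj).eq_univ ⟨⟨p, hp.1⟩, hp.2⟩
  exact hs.2 (huniv.ge (mem_univ (⟨s, hs.1⟩ : S)))

lemma not_joinedIn_of_frontier_disjoint {F O : Set X} (hO : IsOpen O) (hp : p ∈ O) (hs : s ∉ O)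
    (hF : Disjoint F (frontier O)) : ¬JoinedIn F p s := by
  rintro ⟨γ, hγ⟩
  obtain ⟨_, ⟨t, rfl⟩, ht⟩ := inter_frontier_nonempty_of_isPreconnected
    (isPreconnected_range γ.continuous) hO ⟨γ.source_mem_range, hp⟩ ⟨γ.target_mem_range, hs⟩
  exact Set.disjoint_left.1 hF (hγ t) ht

lemma exists_gt_not_joinedIn_sublevel [CompactSpace X] [NormalSpace X] (hf : Continuous f)
    {A : Set X} (hA : IsClosed A) (hAc : ∀ x ∈ A, ∀ᶠ y in 𝓝 x, f y ≤ c → y ∈ A)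
    (hp : p ∈ A) (hs : s ∉ A) (hsc : f s ≤ c) : ∃ c' > c, ¬JoinedIn {x | f x < c'} p s := by
  have hA_sub : A ⊆ interior (A ∪ {x | c < f x}) := fun x hx ↦ mem_interior_iff_mem_nhds.2 <|
    (hAc x hx).mono fun y hy ↦ (le_or_gt (f y) c).imp hy id
  obtain ⟨O, hO, hAO, hO_sub⟩ := normal_exists_closure_subset hA isOpen_interior hA_sub
  have hfrontier : ∀ x ∈ frontier O, c < f x := fun x hx ↦
    (interior_subset (hO_sub hx.1)).resolve_left fun hxA ↦ hx.2 (hO.interior_eq.symm ▸ hAO hxA)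
  have hsO : s ∉ O := fun h ↦
    (interior_subset (hO_sub (subset_closure h))).elim hs hsc.not_gt
  obtain ⟨c', hcc', hc'⟩ :=
    isClosed_frontier.isCompact.exists_forall_le' hf.continuousOn hfrontier
  exact ⟨c', hcc', not_joinedIn_of_frontier_disjoint hO (hAO hp) hsO <|
    Set.disjoint_left.2 fun x hx hxO ↦ (hc' x hxO).not_gt hx⟩

lemma exists_lt_joinedIn_sublevel (hf : Continuous f) (h : JoinedIn {x | f x < M} p s) :
    ∃ c < M, JoinedIn {x | f x < c} p s := by
  obtain ⟨γ, hγ⟩ := h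
  obtain ⟨t, -, ht⟩ := isCompact_univ.exists_isMaxOn univ_nonempty
    (hf.comp γ.continuous).continuousOn
  obtain ⟨c, htc, hcM⟩ := exists_between (show f (γ t) < M from hγ t)
  exact ⟨c, hcM, γ, fun u ↦ (ht (mem_univ u)).trans_lt htc⟩

lemma mem_pathComponentIn_of_mem_closure [LocallyPathConnectedSpace X] {F : Set X} (hF : IsOpen F)
    (hx : x ∈ closure (pathComponentIn F p)) (hxF : x ∈ F) : x ∈ pathComponentIn F p := by
  obtain ⟨y, hxy, hpy⟩ := mem_closure_iff.1 hx _ (hF.pathComponentIn x)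
    (mem_pathComponentIn_self hxF)
  exact JoinedIn.trans hpy (JoinedIn.symm hxy)

lemma IsPassable.eventually_mem_closure_pathComponentIn (hx : IsPassable f x)
    (hxV : x ∈ closure (pathComponentIn {z | f z < f x} p)) :
    ∀ᶠ y in 𝓝 x, f y ≤ f x → y ∈ closure (pathComponentIn {z | f z < f x} p) := by
  obtain ⟨w, hw⟩ := hx
  obtain ⟨v, hpv, -, hv⟩ := ((mem_closure_iff_frequently.1 hxV).and_eventually hw).exists
  have hpw : JoinedIn {z | f z < f x} p w := JoinedIn.trans hpv (hv hpv.target_mem)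
  have hV : ∀ᶠ y in 𝓝 x, f y < f x → y ∈ pathComponentIn {z | f z < f x} p :=
    hw.mono fun y hy hlt ↦ hpw.trans (hy.2 hlt).symm
  filter_upwards [hw, hV.eventually_nhds] with y hy hVy hle
  refine hle.eq_or_lt.elim (fun heq ↦ ?_) fun hlt ↦ subset_closure (hVy.self_of_nhds hlt)
  exact mem_closure_iff_frequently.2 <|
    ((mem_closure_iff_frequently.1 (hy.1 heq)).and_eventually hVy).mono fun z hz ↦ hz.2 hz.1

lemma IsStrictLocalMin.eventually_eq_of_le (hx : IsStrictLocalMin f x) :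
    ∀ᶠ y in 𝓝 x, f y ≤ f x → y = x :=
  (eventually_nhdsWithin_iff.1 hx).mono fun _ hy hle ↦ not_imp_comm.1 hy hle.not_gt

variable [CompactSpace X] [T4Space X] [LocallyPathConnectedSpace X]

lemma exists_gt_not_joinedIn_sublevel_of_not_joinedIn (hf : Continuous f)
    (hp : IsStrictLocalMin f p) (hsp : f s ≤ f p) (hne : s ≠ p) (hpc : f p ≤ c)
    (hlevel : ∀ x, f x = c → ¬IsStrictLocalMin f x → IsPassable f x)
    (h : ¬JoinedIn {x | f x < c} p s) : ∃ c' > c, ¬JoinedIn {x | f x < c'} p s := by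
  set V := pathComponentIn {x | f x < c} p
  have hopen : IsOpen {x | f x < c} := isOpen_lt hf continuous_const
  have hle : closure V ⊆ {x | f x ≤ c} := closure_minimal
    (pathComponentIn_subset.trans fun x (hx : f x < c) ↦ hx.le) (isClosed_le hf continuous_const)
  -- `p` has to be added because `V` is empty when `c = f p`.
  refine exists_gt_not_joinedIn_sublevel hf (A := insert p (closure V))
    (isClosed_singleton.union isClosed_closure) ?_ (mem_insert p _) ?_ (hsp.trans hpc)
  · intro x hx
    have hxc : f x ≤ c := hx.elim (fun h ↦ h ▸ hpc) fun h ↦ hle h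
    rcases hxc.lt_or_eq with hlt | rfl
    · have hxV : x ∈ V := hx.elim (fun h ↦ h ▸ mem_pathComponentIn_self (h ▸ hlt))
        fun hx ↦ mem_pathComponentIn_of_mem_closure hopen hx hlt
      filter_upwards [(hopen.pathComponentIn p).mem_nhds hxV] with y hy _
      exact .inr (subset_closure hy)
    · by_cases hmin : IsStrictLocalMin f x
      · exact hmin.eventually_eq_of_le.mono fun y hy hle ↦ hy hle ▸ hx
      · have hxV : x ∈ closure V := hx.resolve_left fun h ↦ hmin (h ▸ hp)
        exact ((hlevel x rfl hmin).eventually_mem_closure_pathComponentIn hxV).mono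
          fun y hy hle ↦ .inr (hy hle)
  · rintro (hs | hs)
    · exact hne hs
    · have hsc : f s < c := by
        obtain ⟨y, hy⟩ := closure_nonempty_iff.1 ⟨s, hs⟩
        exact hsp.trans_lt (show JoinedIn {x | f x < c} p y from hy).source_mem
      exact h (mem_pathComponentIn_of_mem_closure hopen hs hsc)

theorem exists_not_isPassable_of_joinedIn (hf : Continuous f) (hp : IsStrictLocalMin f p)
    (hsp : f s ≤ f p) (hne : s ≠ p) (h : JoinedIn {x | f x < M} p s) :
    ∃ x, f p ≤ f x ∧ f x < M ∧ ¬IsStrictLocalMin f x ∧ ¬IsPassable f x := by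
  by_contra! hpass
  set S := {c | ¬JoinedIn {x | f x < c} p s}
  have hmono {c c' : ℝ} (hc : c ≤ c') (hj : JoinedIn {x | f x < c} p s) :
      JoinedIn {x | f x < c'} p s := hj.mono fun x hx ↦ lt_of_lt_of_le hx hc
  have hSM : M ∈ upperBounds S := fun c hc ↦ le_of_not_ge fun hMc ↦ hc (hmono hMc h)
  have hpS : f p ∈ S := fun hj ↦ lt_irrefl (f p) hj.source_mem
  have hsup : sSup S ∈ S := fun hj ↦ by
    obtain ⟨c, hc, hjc⟩ := exists_lt_joinedIn_sublevel hf hj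
    obtain ⟨d, hd, hcd⟩ := exists_lt_of_lt_csSup ⟨_, hpS⟩ hc
    exact hd (hmono hcd.le hjc)
  have hsupM : sSup S < M :=
    (csSup_le ⟨_, hpS⟩ hSM).lt_of_ne fun heq ↦ hsup (by rwa [heq])
  obtain ⟨c, hc, hcS⟩ := exists_gt_not_joinedIn_sublevel_of_not_joinedIn hf hp hsp hne
    (le_csSup ⟨M, hSM⟩ hpS)
    (fun x hx ↦ hpass x (hx ▸ le_csSup ⟨M, hSM⟩ hpS) (hx ▸ hsupM)) hsup
  exact hc.not_ge (le_csSup ⟨M, hSM⟩ hcS)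

end MountainPass

section Curve

variable {X : Type*} [TopologicalSpace X] {f : X → ℝ} {γ : ℝ → X} {u t₀ w : ℝ}

lemma IsPassable.joinedIn_of_curve (hpass : IsPassable f (γ t₀)) (hγ : Continuous γ)
    (hu : u < t₀) (hw : t₀ < w)
    (hlt : ∀ t ∈ Icc u w, t ≠ t₀ → f (γ t) < f (γ t₀)) :
    JoinedIn {x | f x < f (γ t₀)} (γ u) (γ w) := by
  obtain ⟨z, hz⟩ := hpass
  have hev : ∀ᶠ t in 𝓝 t₀, f (γ t) < f (γ t₀) → JoinedIn {x | f x < f (γ t₀)} (γ t) z :=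
    (hγ.tendsto t₀).eventually (hz.mono fun _ h ↦ h.2)
  have harc {a b : ℝ} (hab : a ≤ b) (hsub : Icc a b ⊆ Icc u w) (hne : t₀ ∉ Icc a b) :
      JoinedIn {x | f x < f (γ t₀)} (γ a) (γ b) := by
    have hjoin := ((convex_Icc a b).isPathConnected (nonempty_Icc.2 hab)).joinedIn _
      (left_mem_Icc.2 hab) _ (right_mem_Icc.2 hab)
    refine (hjoin.map hγ).mono (image_subset_iff.2 fun t ht ↦ ?_)
    exact hlt t (hsub ht) fun h ↦ hne (h ▸ ht)
  obtain ⟨a, hza, ha⟩ :=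
    ((hev.filter_mono nhdsWithin_le_nhds).and (Ioo_mem_nhdsLT hu)).exists
  obtain ⟨b, hzb, hb⟩ :=
    ((hev.filter_mono nhdsWithin_le_nhds).and (Ioo_mem_nhdsGT hw)).exists
  have hua := harc ha.1.le (Icc_subset_Icc_right (ha.2.trans hw).le) fun h ↦ ha.2.not_ge h.2
  have hbw := harc hb.2.le (Icc_subset_Icc_left (hu.trans hb.1).le) fun h ↦ hb.1.not_ge h.1
  exact (hua.trans (hza hua.target_mem)).trans ((hzb hbw.source_mem).symm.trans hbw)

end Curve

section ConvexDomain

variable {E : Type*} [NormedAddCommGroup E] [NormedSpace ℝ E] {f : E → ℝ} {K : Set E} {v : E}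

lemma lt_of_fderiv_neg {s : Set E} (hs : Convex ℝ s) (hf : Differentiable ℝ f)
    (hneg : ∀ z ∈ s, fderiv ℝ f z v < 0) {y : E} {τ : ℝ} (hτ : 0 < τ) (hy : y ∈ s)
    (hyv : y + τ • v ∈ s) : f (y + τ • v) < f y := by
  obtain ⟨z, hz, hzv⟩ := domain_mvt
    (fun x _ ↦ (hf x).hasFDerivAt.hasFDerivWithinAt) hs hy hyv
  rw [add_sub_cancel_left, map_smul, smul_eq_mul] at hzv
  linarith [mul_neg_of_pos_of_neg hτ (hneg z (hs.segment_subset hy hyv hz))]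

lemma joinedIn_sublevel_of_segment {c : ℝ} (hK : Convex ℝ K) {y z : K}
    (h : ∀ x ∈ segment ℝ (y : E) z, f x < c) : JoinedIn {x : K | f x < c} y z := by
  refine (IsInducing.subtypeVal.joinedIn_image (h y (left_mem_segment ℝ _ _))
    (h z (right_mem_segment ℝ _ _))).1 (JoinedIn.of_segment_subset fun x hx ↦ ?_)
  exact ⟨⟨x, hK.segment_subset y.2 z.2 hx⟩, h x hx, rfl⟩

lemma mem_segment_add_smul {y : E} {σ τ : ℝ} (hσ : σ ∈ Icc 0 τ) :
    y + σ • v ∈ segment ℝ y (y + τ • v) := by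
  rcases hσ.1.eq_or_lt with rfl | hpos
  · simpa using left_mem_segment ℝ y (y + τ • v)
  have hτ : 0 < τ := hpos.trans_le hσ.2
  rw [segment_eq_image']
  refine ⟨σ / τ, ⟨by positivity, div_le_one_of_le₀ hσ.2 hτ.le⟩, ?_⟩
  simp only [add_sub_cancel_left, smul_smul, div_mul_cancel₀ _ hτ.ne']

lemma mem_closure_sublevel_of_fderiv_neg {s : Set E} (hK : Convex ℝ K) (hs : Convex ℝ s)
    (hf : Differentiable ℝ f) (hneg : ∀ z ∈ s, fderiv ℝ f z v < 0) {y : K} {τ : ℝ} (hτ : 0 < τ)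
    (hy : (y : E) ∈ s) (hyv : (y : E) + τ • v ∈ s ∩ K) : y ∈ closure {z : K | f z < f y} := by
  rw [closure_subtype]
  have hlim : Tendsto (fun σ : ℝ ↦ (y : E) + σ • v) (𝓝[>] 0) (𝓝 y) := by
    have : Continuous fun σ : ℝ ↦ (y : E) + σ • v := by fun_prop
    simpa using (this.tendsto 0).mono_left nhdsWithin_le_nhds
  refine mem_closure_of_tendsto hlim ?_
  filter_upwards [Ioc_mem_nhdsGT hτ] with σ hσ
  have hseg := mem_segment_add_smul (y := (y : E)) (v := v) ⟨hσ.1.le, hσ.2⟩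
  exact ⟨⟨_, hK.segment_subset y.2 hyv.2 hseg⟩,
    lt_of_fderiv_neg hs hf hneg hσ.1 hy (hs.segment_subset hy hyv.1 hseg), rfl⟩

lemma joinedIn_sublevel_of_fderiv_neg {s : Set E} (hK : Convex ℝ K) (hs : Convex ℝ s)
    (hf : Differentiable ℝ f) (hneg : ∀ z ∈ s, fderiv ℝ f z v < 0) {y z : K} {τ c : ℝ} (hτ : 0 < τ)
    (hy : (y : E) ∈ s) (hz : (z : E) = y + τ • v) (hzs : (z : E) ∈ s) (hc : f y < c) :
    JoinedIn {x : K | f x < c} y z := by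
  refine joinedIn_sublevel_of_segment hK fun x hx ↦ ?_
  obtain ⟨σ, hσ, rfl⟩ := (segment_eq_image' ℝ (y : E) z).le hx
  have hxs := hs.segment_subset hy hzs hx
  simp only [hz, add_sub_cancel_left, smul_smul] at hxs ⊢
  rcases hσ.1.eq_or_lt with rfl | hpos
  · simpa using hc
  · exact (lt_of_fderiv_neg hs hf hneg (mul_pos hpos hτ) hy hxs).trans hc

/-- The descent direction `v` gives the passage: a whole neighbourhood of `x` flows along `v` into a
small ball on which `f < f x`. -/
lemma isPassable_of_fderiv_neg (hK : Convex ℝ K) (hf : ContDiff ℝ 1 f) (x : K)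
    (hv : fderiv ℝ f x v < 0) (hin : ∀ᶠ τ in 𝓝[>] (0 : ℝ), (x : E) + τ • v ∈ interior K) :
    IsPassable (fun y : K ↦ f y) x := by
  have hcont : Continuous fun z ↦ fderiv ℝ f z v := (hf.continuous_fderiv one_ne_zero).clm_apply
    continuous_const
  obtain ⟨ε, hε, hneg⟩ :=
    Metric.eventually_nhds_iff_ball.1 (hcont.continuousAt.eventually_lt_const hv)
  have hdiff := hf.differentiable one_ne_zero
  have hs := convex_ball (x : E) ε
  have hxs := Metric.mem_ball_self (x := (x : E)) hε
  have hflow (τ : ℝ) : Continuous fun y : E ↦ y + τ • v := by fun_prop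
  have hball : ∀ᶠ τ in 𝓝[>] (0 : ℝ), (x : E) + τ • v ∈ Metric.ball (x : E) ε := by
    have : Continuous fun τ : ℝ ↦ (x : E) + τ • v := by fun_prop
    refine (this.tendsto' 0 x (by simp)).mono_left nhdsWithin_le_nhds ?_
    exact Metric.ball_mem_nhds _ hε
  obtain ⟨τ, ⟨hwK, hws⟩, hτ⟩ := ((hin.and hball).and self_mem_nhdsWithin).exists
  set w : E := x + τ • v
  have hwx : f w < f x := lt_of_fderiv_neg hs hdiff hneg hτ hxs hws
  have hnhds : {z | z ∈ Metric.ball (x : E) ε ∧ f z < f x} ∩ K ∈ 𝓝 w :=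
    inter_mem ((Metric.isOpen_ball.eventually_mem hws).and
      (hdiff.continuous.continuousAt.eventually_lt_const hwx)) (mem_interior_iff_mem_nhds.1 hwK)
  obtain ⟨δ, hδ, hsub⟩ := Metric.mem_nhds_iff.1 hnhds
  refine ⟨⟨w, interior_subset hwK⟩, ?_⟩
  filter_upwards [continuous_subtype_val.continuousAt (Metric.ball_mem_nhds (x : E) hε),
    ((hflow τ).comp continuous_subtype_val).continuousAt (Metric.ball_mem_nhds w hδ)] with y hys hyw
  obtain ⟨⟨hyvs, -⟩, hyvK⟩ := hsub hyw
  refine ⟨fun heq ↦ ?_, fun hlt ↦ ?_⟩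
  · rw [← heq]
    exact mem_closure_sublevel_of_fderiv_neg hK hs hdiff hneg hτ hys ⟨hyvs, hyvK⟩
  · have hflow_y := joinedIn_sublevel_of_fderiv_neg (z := ⟨_, hyvK⟩) hK hs hdiff hneg hτ hys rfl
      hyvs hlt
    refine hflow_y.trans (joinedIn_sublevel_of_segment hK fun z hz ↦ ?_)
    exact (hsub ((convex_ball w δ).segment_subset hyw (Metric.mem_ball_self hδ) hz)).1.2

lemma isPassable_of_mem_interior (hK : Convex ℝ K) (hf : ContDiff ℝ 1 f) (x : K)
    (hx : (x : E) ∈ interior K) (hfx : fderiv ℝ f x ≠ 0) : IsPassable (fun y : K ↦ f y) x := by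
  obtain ⟨v, hv⟩ : ∃ v, fderiv ℝ f x v < 0 := by
    obtain ⟨v, hv⟩ := DFunLike.ne_iff.1 hfx
    rcases lt_or_gt_of_ne hv with hneg | hpos
    · exact ⟨v, hneg⟩
    · exact ⟨-v, by simpa using hpos⟩
  refine isPassable_of_fderiv_neg hK hf x hv ?_
  have : Continuous fun τ : ℝ ↦ (x : E) + τ • v := by fun_prop
  exact (this.tendsto' 0 x (by simp)).mono_left nhdsWithin_le_nhds
    (isOpen_interior.mem_nhds hx)

end ConvexDomain

section UnitBall

lemma isPassable_of_inner_nonpos {E : Type*} [NormedAddCommGroup E] [InnerProductSpace ℝ E]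
    {f : E → ℝ} {v : E} (hf : ContDiff ℝ 1 f) (x : Metric.closedBall (0 : E) 1)
    (hx : ‖(x : E)‖ = 1) (hxv : ⟪(x : E), v⟫ ≤ 0) (hv : fderiv ℝ f x v < 0) :
    IsPassable (fun y : Metric.closedBall (0 : E) 1 ↦ f y) x := by
  have hlim : ∀ᶠ ε in 𝓝[>] (0 : ℝ), fderiv ℝ f x (v - ε • (x : E)) < 0 := by
    have : Continuous fun ε : ℝ ↦ fderiv ℝ f x (v - ε • (x : E)) := by fun_prop
    refine (this.continuousAt.eventually_lt_const ?_).filter_mono nhdsWithin_le_nhds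
    simpa using hv
  obtain ⟨ε, hεv, hε⟩ := (hlim.and self_mem_nhdsWithin).exists
  set v' : E := v - ε • (x : E)
  have hxv' : ⟪(x : E), v'⟫ < 0 := by
    rw [inner_sub_right, inner_smul_right, real_inner_self_eq_norm_sq, hx]
    linarith [show (0 : ℝ) < ε from hε]
  refine isPassable_of_fderiv_neg (convex_closedBall 0 1) hf x hεv ?_
  rw [interior_closedBall _ one_ne_zero]
  have hsmall : ∀ᶠ τ in 𝓝[>] (0 : ℝ), 2 * ⟪(x : E), v'⟫ + τ * ‖v'‖ ^ 2 < 0 := by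
    have : Continuous fun τ : ℝ ↦ 2 * ⟪(x : E), v'⟫ + τ * ‖v'‖ ^ 2 := by fun_prop
    refine (this.continuousAt.eventually_lt_const ?_).filter_mono nhdsWithin_le_nhds
    linarith
  filter_upwards [hsmall, self_mem_nhdsWithin] with τ hτ hpos
  have hsq : ‖(x : E) + τ • v'‖ ^ 2 = 1 + τ * (2 * ⟪(x : E), v'⟫ + τ * ‖v'‖ ^ 2) := by
    rw [norm_add_sq_real, inner_smul_right, norm_smul, mul_pow, Real.norm_eq_abs, sq_abs, hx]
    ring
  have hlt : ‖(x : E) + τ • v'‖ ^ 2 < 1 := by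
    linarith [mul_neg_of_pos_of_neg (show (0 : ℝ) < τ from hpos) hτ]
  exact mem_ball_zero_iff.2 ((sq_lt_one_iff₀ (norm_nonneg _)).1 hlt)

lemma tendsto_inv_norm_smul {E : Type*} [NormedAddCommGroup E] [NormedSpace ℝ E] {x : E}
    (hx : ‖x‖ = 1) : Tendsto (fun y : E ↦ ‖y‖⁻¹ • y) (𝓝 x) (𝓝 x) := by
  have : ContinuousAt (fun y : E ↦ ‖y‖⁻¹ • y) x :=
    (continuous_norm.continuousAt.inv₀ (hx.trans_ne one_ne_zero)).smul continuousAt_id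
  simpa [ContinuousAt, hx] using this

/-- Near `x` the function decreases radially, so it is at least its value at the radial projection
to the sphere. -/
lemma isStrictLocalMin_of_sphere {E : Type*} [NormedAddCommGroup E] [NormedSpace ℝ E] {f : E → ℝ}
    (hf : ContDiff ℝ 1 f) (x : Metric.closedBall (0 : E) 1) (hx : ‖(x : E)‖ = 1)
    (hrad : fderiv ℝ f x x < 0)
    (hmin : ∀ᶠ y : E in 𝓝[Metric.sphere 0 1] x, y ≠ x → f x < f y) :
    IsStrictLocalMin (fun y : Metric.closedBall (0 : E) 1 ↦ f y) x := by
  have hcont : Continuous fun q : E × E ↦ fderiv ℝ f q.1 q.2 :=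
    (hf.continuous_fderiv_apply one_ne_zero)
  have hneg : ∀ᶠ q in 𝓝 (x : E) ×ˢ 𝓝 (x : E), fderiv ℝ f q.1 q.2 < 0 := by
    rw [← nhds_prod_eq]
    exact hcont.continuousAt.eventually_lt_const hrad
  obtain ⟨ε, hε, hneg⟩ := (Metric.nhds_basis_ball.prod_self.eventually_iff).1 hneg
  have hx0 : (x : E) ≠ 0 := norm_ne_zero_iff.1 (hx.trans_ne one_ne_zero)
  have hproj := tendsto_inv_norm_smul hx
  have hev : ∀ᶠ y in 𝓝 (x : E), y ∈ Metric.ball (x : E) ε ∧ y ≠ 0 ∧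
      ‖y‖⁻¹ • y ∈ Metric.ball (x : E) ε ∧ (‖y‖⁻¹ • y ≠ x → f x < f (‖y‖⁻¹ • y)) := by
    have hmin' : ∀ᶠ y : E in 𝓝 x, y ∈ Metric.sphere 0 1 → y ≠ x → f x < f y :=
      eventually_nhdsWithin_iff.1 hmin
    filter_upwards [Metric.ball_mem_nhds (x : E) hε, isOpen_ne.mem_nhds hx0,
      hproj (Metric.ball_mem_nhds (x : E) hε), hproj.eventually hmin'] with y hy hy0 hu hfu
    exact ⟨hy, hy0, hu, hfu (by simp [norm_smul, hy0])⟩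
  refine eventually_nhdsWithin_iff.2 ((continuous_subtype_val.continuousAt.eventually hev).mono ?_)
  rintro ⟨y, hy1⟩ ⟨hy, hy0, hu, hfu⟩ hne
  have hu_eq : ‖y‖⁻¹ • y = y + (‖y‖⁻¹ - 1) • y := by rw [sub_smul, one_smul, add_sub_cancel]
  rcases (mem_closedBall_zero_iff.1 hy1).eq_or_lt with hnorm | hnorm
  · simp only [hnorm, inv_one, one_smul] at hfu
    exact hfu fun h ↦ hne (Subtype.ext h)
  · have hlt : f (‖y‖⁻¹ • y) < f y := by
      rw [hu_eq] at hu ⊢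
      exact lt_of_fderiv_neg (convex_ball (x : E) ε) (hf.differentiable one_ne_zero)
        (fun z hz ↦ hneg (mk_mem_prod hz hy))
        (sub_pos.2 ((one_lt_inv₀ (norm_pos_iff.2 hy0)).2 hnorm)) hy hu
    rcases eq_or_ne (‖y‖⁻¹ • y) x with hux | hux
    · rwa [hux] at hlt
    · exact (hfu hux).trans hlt

end UnitBall

section PolarCoordinates

/-- The unit tangent vector to the circle at `sphPt t`. -/
def tanPt (t : ℝ) : E2 := !₂[-Real.sin t, Real.cos t]

/-- The coordinates of `y` in the orthonormal frame `(sphPt t₀, tanPt t₀)`, as a complex number. -/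
def frameCoord (t₀ : ℝ) (y : E2) : ℂ := ⟨⟪sphPt t₀, y⟫, ⟪tanPt t₀, y⟫⟩

/-- The polar angle of `y` in the branch `(t₀ - π, t₀ + π]`, which is smooth near the ray through
`sphPt t₀`. -/
def polarAngle (t₀ : ℝ) (y : E2) : ℝ := t₀ + (frameCoord t₀ y).arg

/-- The extension of a `2π`-periodic function `h` of the polar angle to a function on the plane that
is constant along rays; its value at the origin is meaningless. -/
def angular (h : ℝ → ℝ) (x : E2) : ℝ := h (polarAngle 0 x)

variable {f : E2 → ℝ} {h : ℝ → ℝ} {r t t₀ : ℝ} {y : E2}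

lemma sphPt_eq (t : ℝ) : sphPt t = !₂[Real.cos t, Real.sin t] := rfl

lemma inner_sphPt (t : ℝ) (y : E2) : ⟪sphPt t, y⟫ = Real.cos t * y 0 + Real.sin t * y 1 := by
  simp [sphPt_eq, PiLp.inner_apply, mul_comm]

lemma inner_tanPt (t : ℝ) (y : E2) : ⟪tanPt t, y⟫ = -Real.sin t * y 0 + Real.cos t * y 1 := by
  simp [tanPt, PiLp.inner_apply, mul_comm]

lemma norm_sphPt (t : ℝ) : ‖sphPt t‖ = 1 := by
  simp [sphPt_eq, EuclideanSpace.norm_eq]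

lemma inner_sphPt_tanPt (t : ℝ) : ⟪sphPt t, tanPt t⟫ = 0 := by
  simp [inner_sphPt, tanPt, mul_comm]

lemma sphPt_mem_sphere (t : ℝ) : sphPt t ∈ Metric.sphere (0 : E2) 1 :=
  mem_sphere_zero_iff_norm.2 (norm_sphPt t)

lemma norm_smul_sphPt (hr : 0 ≤ r) (t : ℝ) : ‖r • sphPt t‖ = r := by
  rw [norm_smul, norm_sphPt, mul_one, Real.norm_of_nonneg hr]

lemma sphPt_add (t₀ α : ℝ) :
    sphPt (t₀ + α) = Real.cos α • sphPt t₀ + Real.sin α • tanPt t₀ := by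
  ext i
  fin_cases i
  · change Real.cos (t₀ + α) = Real.cos α * Real.cos t₀ + Real.sin α * -Real.sin t₀
    rw [Real.cos_add]
    ring
  · change Real.sin (t₀ + α) = Real.cos α * Real.sin t₀ + Real.sin α * Real.cos t₀
    rw [Real.sin_add]
    ring

lemma inner_sphPt_smul_add_inner_tanPt_smul (t : ℝ) (y : E2) :
    ⟪sphPt t, y⟫ • sphPt t + ⟪tanPt t, y⟫ • tanPt t = y := by
  rw [inner_sphPt, inner_tanPt]
  ext i
  fin_cases i
  · change (Real.cos t * y 0 + Real.sin t * y 1) * Real.cos t +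
      (-Real.sin t * y 0 + Real.cos t * y 1) * -Real.sin t = y 0
    linear_combination y 0 * Real.cos_sq_add_sin_sq t
  · change (Real.cos t * y 0 + Real.sin t * y 1) * Real.sin t +
      (-Real.sin t * y 0 + Real.cos t * y 1) * Real.cos t = y 1
    linear_combination y 1 * Real.cos_sq_add_sin_sq t

lemma hasDerivAt_sphPt (t : ℝ) : HasDerivAt sphPt (tanPt t) t := by
  have hcoord : HasDerivAt (fun t ↦ ![Real.cos t, Real.sin t]) ![-Real.sin t, Real.cos t] t :=
    hasDerivAt_pi.2 (Fin.forall_fin_two.2 ⟨Real.hasDerivAt_cos t, Real.hasDerivAt_sin t⟩)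
  exact (EuclideanSpace.equiv (Fin 2) ℝ).symm.hasFDerivAt.comp_hasDerivAt t hcoord

lemma continuous_sphPt : Continuous sphPt :=
  continuous_iff_continuousAt.2 fun t ↦ (hasDerivAt_sphPt t).continuousAt

lemma norm_frameCoord (t₀ : ℝ) (y : E2) : ‖frameCoord t₀ y‖ = ‖y‖ := by
  rw [← sq_eq_sq₀ (norm_nonneg _) (norm_nonneg _), Complex.sq_norm, Complex.normSq_apply,
    EuclideanSpace.real_norm_sq_eq, Fin.sum_univ_two]
  simp only [frameCoord, inner_sphPt, inner_tanPt]
  linear_combination (y 0 ^ 2 + y 1 ^ 2) * Real.cos_sq_add_sin_sq t₀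

lemma norm_smul_sphPt_polarAngle (t₀ : ℝ) (y : E2) : ‖y‖ • sphPt (polarAngle t₀ y) = y := by
  conv_rhs => rw [← inner_sphPt_smul_add_inner_tanPt_smul t₀ y]
  rw [polarAngle, sphPt_add, smul_add, smul_smul, smul_smul, ← norm_frameCoord t₀,
    Complex.norm_mul_cos_arg, Complex.norm_mul_sin_arg]
  rfl

lemma exists_eq_norm_smul_sphPt (x : E2) : ∃ t, ‖x‖ • sphPt t = x :=
  ⟨_, norm_smul_sphPt_polarAngle 0 x⟩

lemma frameCoord_smul_sphPt (r t : ℝ) : frameCoord t (r • sphPt t) = r := by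
  apply Complex.ext
  · simp [frameCoord, inner_smul_right, norm_sphPt]
  · simp [frameCoord, inner_smul_right, real_inner_comm, inner_sphPt_tanPt]

lemma polarAngle_smul_sphPt (hr : 0 ≤ r) (t : ℝ) : polarAngle t (r • sphPt t) = t := by
  rw [polarAngle, frameCoord_smul_sphPt, Complex.arg_ofReal_of_nonneg hr, add_zero]

lemma contDiffAt_polarAngle {n : WithTop ℕ∞} (hr : 0 < r) (t : ℝ) :
    ContDiffAt ℝ n (polarAngle t) (r • sphPt t) := by
  have hframe : ContDiff ℝ n (frameCoord t) := by
    have : ContDiff ℝ n fun y : E2 ↦ (⟪sphPt t, y⟫, ⟪tanPt t, y⟫) :=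
      (contDiff_const.inner ℝ contDiff_id).prodMk (contDiff_const.inner ℝ contDiff_id)
    exact Complex.equivRealProdCLM.symm.contDiff.comp this
  have hslit : frameCoord t (r • sphPt t) ∈ Complex.slitPlane := by
    rw [frameCoord_smul_sphPt]
    exact Complex.ofReal_mem_slitPlane.2 hr
  have hlog : ContDiffAt ℝ n Complex.log (frameCoord t (r • sphPt t)) :=
    (Complex.contDiffAt_log hslit).restrict_scalars ℝ
  have harg : ContDiffAt ℝ n (fun y ↦ (frameCoord t y).arg) (r • sphPt t) := by
    simpa [Function.comp_def, Complex.log_im] using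
      Complex.imCLM.contDiff.contDiffAt.comp _ (hlog.comp _ hframe.contDiffAt)
  exact contDiffAt_const.add harg

lemma eq_of_sphPt_eq_sphPt {t t' : ℝ} (hh : Function.Periodic h (2 * Real.pi))
    (htt' : sphPt t = sphPt t') : h t = h t' := by
  have hcos : Real.cos t = Real.cos t' := congr($htt' 0)
  have hsin : Real.sin t = Real.sin t' := congr($htt' 1)
  obtain ⟨k, hk⟩ := Real.Angle.angle_eq_iff_two_pi_dvd_sub.1 (Real.Angle.cos_sin_inj hcos hsin)
  rw [← sub_add_cancel t t', hk, mul_comm, add_comm, hh.int_mul k]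

lemma angular_smul_sphPt (hh : Function.Periodic h (2 * Real.pi)) (hr : 0 < r) (t : ℝ) :
    angular h (r • sphPt t) = h t := by
  refine eq_of_sphPt_eq_sphPt hh (smul_right_injective E2 hr.ne' ?_)
  simpa [norm_smul_sphPt hr.le] using norm_smul_sphPt_polarAngle 0 (r • sphPt t)

lemma contDiffAt_angular {n : WithTop ℕ∞} (hh : Function.Periodic h (2 * Real.pi))
    (hsmooth : ContDiff ℝ n h) {x : E2} (hx : x ≠ 0) : ContDiffAt ℝ n (angular h) x := by
  obtain ⟨t, ht⟩ := exists_eq_norm_smul_sphPt x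
  have heq : angular h =ᶠ[𝓝 x] h ∘ polarAngle t := by
    filter_upwards [isOpen_ne.mem_nhds hx] with y hy
    conv_lhs => rw [← norm_smul_sphPt_polarAngle t y]
    exact angular_smul_sphPt hh (norm_pos_iff.2 hy) _
  have hangle : ContDiffAt ℝ n (polarAngle t) x :=
    ht ▸ contDiffAt_polarAngle (norm_pos_iff.2 hx) t
  exact (hsmooth.contDiffAt.comp x hangle).congr_of_eventuallyEq heq

lemma hasDerivAt_comp_smul_sphPt_angle (hf : Differentiable ℝ f) (r t : ℝ) :
    HasDerivAt (fun t ↦ f (r • sphPt t)) (r * fderiv ℝ f (r • sphPt t) (tanPt t)) t := by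
  simpa [Function.comp_def] using
    (hf (r • sphPt t)).hasFDerivAt.comp_hasDerivAt t ((hasDerivAt_sphPt t).fun_const_smul r)

lemma hasDerivAt_comp_smul_sphPt_radius (hf : Differentiable ℝ f) (r t : ℝ) :
    HasDerivAt (fun r ↦ f (r • sphPt t)) (fderiv ℝ f (r • sphPt t) (sphPt t)) r := by
  simpa [Function.comp_def] using
    (hf (r • sphPt t)).hasFDerivAt.comp_hasDerivAt r ((hasDerivAt_id' r).smul_const (sphPt t))

lemma fderiv_sphPt_tanPt {g : ℝ → ℝ} (hf : Differentiable ℝ f) (hfg : ∀ t, f (sphPt t) = g t)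
    (t : ℝ) : fderiv ℝ f (sphPt t) (tanPt t) = deriv g t := by
  have h := hasDerivAt_comp_smul_sphPt_angle hf 1 t
  simp only [one_smul, one_mul, hfg] at h
  exact h.deriv.symm

end PolarCoordinates

section MonotoneArc

variable {φ : ℝ → ℝ} {u w : ℝ}

lemma not_isLocalMax_left_of_strictMonoOn (huw : u < w) (hφ : StrictMonoOn φ (Icc u w)) :
    ¬IsLocalMax φ u := fun h ↦ by
  obtain ⟨t, hle, ht⟩ :=
    ((h.filter_mono nhdsWithin_le_nhds).and (Ioo_mem_nhdsGT huw)).exists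
  exact hle.not_gt (hφ (left_mem_Icc.2 huw.le) (Ioo_subset_Icc_self ht) ht.1)

lemma not_isLocalMin_right_of_strictMonoOn (huw : u < w) (hφ : StrictMonoOn φ (Icc u w)) :
    ¬IsLocalMin φ w := fun h ↦ by
  obtain ⟨t, hle, ht⟩ :=
    ((h.filter_mono nhdsWithin_le_nhds).and (Ioo_mem_nhdsLT huw)).exists
  exact hle.not_gt (hφ (Ioo_subset_Icc_self ht) (right_mem_Icc.2 huw.le) ht.2)

lemma not_isLocalMin_left_of_strictAntiOn (huw : u < w) (hφ : StrictAntiOn φ (Icc u w)) :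
    ¬IsLocalMin φ u := fun h ↦ not_isLocalMax_left_of_strictMonoOn huw hφ.neg h.neg

lemma not_isLocalMax_right_of_strictAntiOn (huw : u < w) (hφ : StrictAntiOn φ (Icc u w)) :
    ¬IsLocalMax φ w := fun h ↦ not_isLocalMin_right_of_strictMonoOn huw hφ.neg h.neg

end MonotoneArc

namespace Ribbon

variable {n : ℕ} (a : Ribbon n) {m k : ℤ} {t : ℝ}

/-- The index of the `m`-th node, where nodes are numbered by `ℤ` going round the circle. -/
def nodeIndex (m : ℤ) : Fin n :=
  ⟨(m % n).toNat, (Int.toNat_lt (m.emod_nonneg (by exact_mod_cast a.n_pos.ne'))).2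
    (m.emod_lt_of_pos (by exact_mod_cast a.n_pos))⟩

/-- The angle of the `m`-th node on the universal cover `ℝ` of the circle; the nodes
`0, …, n - 1` are the given angles in `[0, 2π)`. -/
def node (m : ℤ) : ℝ := a.θ (a.nodeIndex m) + (m / n : ℤ) * (2 * Real.pi)

/-- The `m`-th node is a local maximum of the boundary function. -/
def IsMaxNode (m : ℤ) : Prop := deriv (deriv a.g) (a.node m) < 0

/-- The `m`-th node is a local minimum of the boundary function. -/
def IsMinNode (m : ℤ) : Prop := 0 < deriv (deriv a.g) (a.node m)

lemma coe_nodeIndex (m : ℤ) : ((a.nodeIndex m : ℕ) : ℤ) = m % n :=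
  Int.toNat_of_nonneg (m.emod_nonneg (by exact_mod_cast a.n_pos.ne'))

lemma nodeIndex_coe (i : Fin n) : a.nodeIndex i = i := by
  ext
  zify
  rw [coe_nodeIndex, Int.emod_eq_of_lt (by positivity) (by exact_mod_cast i.2)]

lemma nodeIndex_coe_add_one (i : Fin n) : a.nodeIndex (i + 1) = a.next i := by
  ext
  zify
  rw [coe_nodeIndex]
  simp [next]

lemma nodeIndex_add_mul (m q : ℤ) : a.nodeIndex (m + n * q) = a.nodeIndex m := by
  ext
  zify
  rw [coe_nodeIndex, coe_nodeIndex, Int.add_mul_emod_self_left]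

lemma node_add_mul (m q : ℤ) : a.node (m + n * q) = a.node m + q * (2 * Real.pi) := by
  rw [node, node, nodeIndex_add_mul,
    Int.add_mul_ediv_left _ _ (by exact_mod_cast a.n_pos.ne')]
  push_cast
  ring

lemma node_coe (i : Fin n) : a.node i = a.θ i := by
  rw [node, nodeIndex_coe, Int.ediv_eq_zero_of_lt (by positivity) (by exact_mod_cast i.2)]
  simp

lemma coe_nodeIndex_add_mul_ediv (m : ℤ) : (a.nodeIndex m : ℤ) + n * (m / n) = m := by
  rw [coe_nodeIndex, Int.emod_add_mul_ediv]

lemma node_lt_node_add_one (m : ℤ) : a.node m < a.node (m + 1) := by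
  obtain ⟨i, q, rfl⟩ : ∃ (i : Fin n) (q : ℤ), m = i + n * q :=
    ⟨_, _, (a.coe_nodeIndex_add_mul_ediv m).symm⟩
  rw [add_right_comm, node_add_mul, node_add_mul]
  refine add_lt_add_left ?_ _
  rw [node_coe]
  by_cases hi : (i : ℕ) + 1 < n
  · have hnext : ((i : ℕ) : ℤ) + 1 = ((⟨i + 1, hi⟩ : Fin n) : ℕ) := by simp
    rw [hnext, node_coe]
    exact a.theta_mono (Fin.mk_lt_mk.2 (Nat.lt_succ_self i))
  · have hlast : ((i : ℕ) : ℤ) + 1 = ((⟨0, a.n_pos⟩ : Fin n) : ℕ) + n * 1 := by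
      have := i.2
      simp only [Nat.cast_zero]
      omega
    rw [hlast, node_add_mul, node_coe, Int.cast_one, one_mul]
    linarith [(a.theta_mem i).2, (a.theta_mem ⟨0, a.n_pos⟩).1]

lemma strictMono_node : StrictMono a.node := strictMono_int_of_lt_succ a.node_lt_node_add_one

lemma exists_mem_Ico_node (t : ℝ) : ∃ m, t ∈ Ico (a.node m) (a.node (m + 1)) := by
  have hnode (q : ℤ) : a.node (n * q) = a.node 0 + q * (2 * Real.pi) := by
    rw [← node_add_mul, zero_add]
  obtain ⟨q, hq⟩ := exists_int_gt ((t - a.node 0) / (2 * Real.pi))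
  obtain ⟨q', hq'⟩ := exists_int_lt ((t - a.node 0) / (2 * Real.pi))
  rw [div_lt_iff₀ Real.two_pi_pos] at hq
  rw [lt_div_iff₀ Real.two_pi_pos] at hq'
  obtain ⟨m, hm, hmax⟩ := Int.exists_greatest_of_bdd (P := fun m ↦ a.node m ≤ t)
    ⟨n * q, fun m hm ↦ (a.strictMono_node.lt_iff_lt.1 (by rw [hnode]; linarith)).le⟩
    ⟨n * q', by rw [hnode]; linarith⟩
  exact ⟨m, hm, lt_of_not_ge fun h ↦ (Int.lt_succ m).not_ge (hmax _ h)⟩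

lemma apply_node {h : ℝ → ℝ} (hh : Function.Periodic h (2 * Real.pi)) (m : ℤ) :
    h (a.node m) = h (a.θ (a.nodeIndex m)) := hh.int_mul _ _

lemma sphPt_node (m : ℤ) : sphPt (a.node m) = sphPt (a.θ (a.nodeIndex m)) := by
  simp [sphPt_eq, node]

lemma differentiable_g : Differentiable ℝ a.g := a.smooth_g.differentiable (by simp)

lemma periodic_deriv_g : Function.Periodic (deriv a.g) (2 * Real.pi) := fun t ↦ by
  rw [← deriv_comp_add_const, funext a.periodic_g]

lemma periodic_deriv_deriv_g : Function.Periodic (deriv (deriv a.g)) (2 * Real.pi) := fun t ↦ by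
  rw [← deriv_comp_add_const, funext a.periodic_deriv_g]

lemma deriv_g_node (m : ℤ) : deriv a.g (a.node m) = 0 := by
  rw [a.apply_node a.periodic_deriv_g, a.node_crit]

lemma exists_eq_node_of_deriv_g_eq_zero (ht : deriv a.g t = 0) : ∃ m, t = a.node m := by
  set k := toIcoDiv Real.two_pi_pos 0 t
  have hk : t - k * (2 * Real.pi) ∈ Ico 0 (2 * Real.pi) := by
    simpa only [zsmul_eq_mul, zero_add] using sub_toIcoDiv_zsmul_mem_Ico Real.two_pi_pos 0 t
  obtain ⟨i, hi⟩ := a.crit_only _ hk (by rwa [a.periodic_deriv_g.sub_int_mul_eq])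
  exact ⟨i + n * k, by rw [node_add_mul, node_coe, ← hi, sub_add_cancel]⟩

lemma emod_eq_of_g_node_eq (h : a.g (a.node m) = a.g (a.node k)) : m % n = k % n := by
  rw [a.apply_node a.periodic_g, a.apply_node a.periodic_g] at h
  rw [← coe_nodeIndex, ← coe_nodeIndex, a.values_distinct _ _ h]

lemma isMinNode_or_isMaxNode (m : ℤ) : a.IsMinNode m ∨ a.IsMaxNode m := by
  have : deriv (deriv a.g) (a.node m) ≠ 0 := by
    rw [a.apply_node a.periodic_deriv_deriv_g]
    exact a.node_nondeg _
  exact this.lt_or_gt.symm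

variable {a}

lemma IsMaxNode.not_isMinNode (h : a.IsMaxNode m) : ¬a.IsMinNode m := lt_asymm h

lemma IsMinNode.isLocalMin (h : a.IsMinNode m) : IsLocalMin a.g (a.node m) :=
  isLocalMin_of_deriv_deriv_pos h (a.deriv_g_node m) a.differentiable_g.continuous.continuousAt

lemma IsMaxNode.isLocalMax (h : a.IsMaxNode m) : IsLocalMax a.g (a.node m) :=
  isLocalMax_of_deriv_deriv_neg h (a.deriv_g_node m) a.differentiable_g.continuous.continuousAt

variable (a)

lemma injOn_g_arc (m : ℤ) : InjOn a.g (Icc (a.node m) (a.node (m + 1))) := by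
  intro x hx y hy hxy
  by_contra hne
  wlog hlt : x < y generalizing x y
  · exact this hy hx hxy.symm (Ne.symm hne) (lt_of_le_of_ne (le_of_not_gt hlt) (Ne.symm hne))
  obtain ⟨t, ht, hderiv⟩ := exists_deriv_eq_zero hlt a.differentiable_g.continuous.continuousOn hxy
  obtain ⟨k, rfl⟩ := a.exists_eq_node_of_deriv_g_eq_zero hderiv
  have hmk := a.strictMono_node.lt_iff_lt.1 (hx.1.trans_lt ht.1)
  have hkm := a.strictMono_node.lt_iff_lt.1 (ht.2.trans_le hy.2)
  omega

lemma strictMonoOn_or_strictAntiOn_g_arc (m : ℤ) :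
    a.IsMinNode m ∧ a.IsMaxNode (m + 1) ∧ StrictMonoOn a.g (Icc (a.node m) (a.node (m + 1))) ∨
    a.IsMaxNode m ∧ a.IsMinNode (m + 1) ∧ StrictAntiOn a.g (Icc (a.node m) (a.node (m + 1))) := by
  have hlt := a.node_lt_node_add_one m
  rcases a.differentiable_g.continuous.continuousOn.strictMonoOn_of_injOn_Icc' hlt.le
    (a.injOn_g_arc m) with hmono | hanti
  · exact .inl ⟨(a.isMinNode_or_isMaxNode m).resolve_right fun h ↦
      not_isLocalMax_left_of_strictMonoOn hlt hmono h.isLocalMax,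
      (a.isMinNode_or_isMaxNode _).resolve_left fun h ↦
        not_isLocalMin_right_of_strictMonoOn hlt hmono h.isLocalMin, hmono⟩
  · exact .inr ⟨(a.isMinNode_or_isMaxNode m).resolve_left fun h ↦
      not_isLocalMin_left_of_strictAntiOn hlt hanti h.isLocalMin,
      (a.isMinNode_or_isMaxNode _).resolve_right fun h ↦
        not_isLocalMax_right_of_strictAntiOn hlt hanti h.isLocalMax, hanti⟩

variable {a}

lemma IsMinNode.succ (h : a.IsMinNode m) :
    a.IsMaxNode (m + 1) ∧ StrictMonoOn a.g (Icc (a.node m) (a.node (m + 1))) :=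
  ((a.strictMonoOn_or_strictAntiOn_g_arc m).resolve_right fun h' ↦ h'.1.not_isMinNode h).2

lemma IsMaxNode.succ (h : a.IsMaxNode m) :
    a.IsMinNode (m + 1) ∧ StrictAntiOn a.g (Icc (a.node m) (a.node (m + 1))) :=
  ((a.strictMonoOn_or_strictAntiOn_g_arc m).resolve_left fun h' ↦ h.not_isMinNode h'.1).2

lemma IsMaxNode.isMinNode_sub_one (h : a.IsMaxNode m) : a.IsMinNode (m - 1) :=
  (a.isMinNode_or_isMaxNode _).resolve_right fun h' ↦
    h.not_isMinNode (by simpa only [sub_add_cancel] using h'.succ.1)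

lemma IsMinNode.strictAntiOn_pred (h : a.IsMinNode m) :
    StrictAntiOn a.g (Icc (a.node (m - 1)) (a.node m)) := by
  rw [← sub_add_cancel m 1] at h
  simpa using ((a.strictMonoOn_or_strictAntiOn_g_arc (m - 1)).resolve_left
    fun h' ↦ h'.2.1.not_isMinNode h).2.2

lemma IsMaxNode.strictMonoOn_pred (h : a.IsMaxNode m) :
    StrictMonoOn a.g (Icc (a.node (m - 1)) (a.node m)) := by
  rw [← sub_add_cancel m 1] at h
  simpa using ((a.strictMonoOn_or_strictAntiOn_g_arc (m - 1)).resolve_right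
    fun h' ↦ h.not_isMinNode h'.2.1).2.2

lemma IsMinNode.g_node_lt (h : a.IsMinNode m)
    (ht : t ∈ Icc (a.node (m - 1)) (a.node (m + 1))) (hne : t ≠ a.node m) :
    a.g (a.node m) < a.g t := by
  rcases hne.lt_or_gt with hlt | hlt
  · exact h.strictAntiOn_pred ⟨ht.1, hlt.le⟩ ⟨ht.1.trans hlt.le, le_rfl⟩ hlt
  · exact h.succ.2 ⟨le_rfl, hlt.le.trans ht.2⟩ ⟨hlt.le, ht.2⟩ hlt

lemma IsMaxNode.g_lt_g_node (h : a.IsMaxNode m)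
    (ht : t ∈ Icc (a.node (m - 1)) (a.node (m + 1))) (hne : t ≠ a.node m) :
    a.g t < a.g (a.node m) := by
  rcases hne.lt_or_gt with hlt | hlt
  · exact h.strictMonoOn_pred ⟨ht.1, hlt.le⟩ ⟨ht.1.trans hlt.le, le_rfl⟩ hlt
  · exact h.succ.2 ⟨le_rfl, hlt.le.trans ht.2⟩ ⟨hlt.le, ht.2⟩ hlt

end Ribbon

section LowerBound

variable {n : ℕ} {a : Ribbon n} {f : E2 → ℝ} {m : ℤ}

/-- `sphPt t` as a point of the closed disc. -/
def closedDiscPt (t : ℝ) : Metric.closedBall (0 : E2) 1 :=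
  ⟨sphPt t, Metric.sphere_subset_closedBall (sphPt_mem_sphere t)⟩

lemma continuous_closedDiscPt : Continuous closedDiscPt := continuous_sphPt.subtype_mk _

lemma coe_closedDiscPt (t : ℝ) : (closedDiscPt t : E2) = sphPt t := rfl

lemma eq_closedDiscPt_of_norm_eq_one {x : Metric.closedBall (0 : E2) 1} (hx : ‖(x : E2)‖ = 1) :
    ∃ t, x = closedDiscPt t := by
  obtain ⟨t, ht⟩ := exists_eq_norm_smul_sphPt (x : E2)
  exact ⟨t, Subtype.ext (by rw [coe_closedDiscPt, ← ht, hx, one_smul])⟩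

namespace IsExtension

lemma contDiff_one (hf : IsExtension a f) : ContDiff ℝ 1 f := hf.1.of_le (by exact_mod_cast le_top)

lemma fderiv_sphPt_node_pos (hf : IsExtension a f) (hpos : ∀ i, a.ν i = 1) (hm : a.IsMaxNode m) :
    0 < fderiv ℝ f (sphPt (a.node m)) (sphPt (a.node m)) := by
  rw [Ribbon.IsMaxNode, a.apply_node a.periodic_deriv_deriv_g] at hm
  simpa [hpos, inner_gradient_left, Ribbon.sphPt_node] using (hf.2.2.2 _).1 hm

lemma fderiv_sphPt_node_neg (hf : IsExtension a f) (hpos : ∀ i, a.ν i = 1) (hm : a.IsMinNode m) :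
    fderiv ℝ f (sphPt (a.node m)) (sphPt (a.node m)) < 0 := by
  rw [Ribbon.IsMinNode, a.apply_node a.periodic_deriv_deriv_g] at hm
  simpa [hpos, inner_gradient_left, Ribbon.sphPt_node] using (hf.2.2.2 _).2 hm

lemma eventually_lt_on_sphere (hf : IsExtension a f) (hm : a.IsMinNode m) :
    ∀ᶠ y in 𝓝[Metric.sphere 0 1] sphPt (a.node m),
      y ≠ sphPt (a.node m) → f (sphPt (a.node m)) < f y := by
  have hpolar : Tendsto (polarAngle (a.node m)) (𝓝 (sphPt (a.node m))) (𝓝 (a.node m)) := by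
    have := (contDiffAt_polarAngle (n := 0) one_pos (a.node m)).continuousAt.tendsto
    rwa [polarAngle_smul_sphPt zero_le_one, one_smul] at this
  have harc : ∀ᶠ t in 𝓝 (a.node m), t ∈ Icc (a.node (m - 1)) (a.node (m + 1)) :=
    Icc_mem_nhds (a.strictMono_node (sub_one_lt m)) (a.strictMono_node (lt_add_one m))
  filter_upwards [(hpolar.eventually harc).filter_mono nhdsWithin_le_nhds, self_mem_nhdsWithin]
    with y hy hsphere hne
  have hyt : sphPt (polarAngle (a.node m) y) = y := by
    simpa [mem_sphere_zero_iff_norm.1 hsphere] using norm_smul_sphPt_polarAngle (a.node m) y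
  rw [← hyt, hf.2.1, hf.2.1]
  exact hm.g_node_lt hy fun h ↦ hne (by rw [← hyt, h])

lemma apply_closedDiscPt (hf : IsExtension a f) (t : ℝ) : f (closedDiscPt t) = a.g t := hf.2.1 t

lemma isStrictLocalMin_of_isMinNode (hf : IsExtension a f) (hpos : ∀ i, a.ν i = 1)
    (hm : a.IsMinNode m) :
    IsStrictLocalMin (fun y : Metric.closedBall (0 : E2) 1 ↦ f y) (closedDiscPt (a.node m)) :=
  isStrictLocalMin_of_sphere hf.contDiff_one _ (norm_sphPt _) (hf.fderiv_sphPt_node_neg hpos hm)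
    (hf.eventually_lt_on_sphere hm)

lemma isPassable_of_isMaxNode (hf : IsExtension a f) (hpos : ∀ i, a.ν i = 1)
    (hm : a.IsMaxNode m) :
    IsPassable (fun y : Metric.closedBall (0 : E2) 1 ↦ f y) (closedDiscPt (a.node m)) := by
  refine isPassable_of_inner_nonpos (v := -sphPt (a.node m)) hf.contDiff_one _ (norm_sphPt _) ?_ ?_
  · simp [coe_closedDiscPt]
  · simpa [coe_closedDiscPt] using hf.fderiv_sphPt_node_pos hpos hm

lemma isPassable_of_deriv_g_ne_zero (hf : IsExtension a f) {t : ℝ} (ht : deriv a.g t ≠ 0) :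
    IsPassable (fun y : Metric.closedBall (0 : E2) 1 ↦ f y) (closedDiscPt t) := by
  have htan := fderiv_sphPt_tanPt (hf.contDiff_one.differentiable one_ne_zero) hf.2.1 t
  obtain ⟨ε, hε⟩ : ∃ ε : ℝ, ε * deriv a.g t < 0 :=
    ⟨-deriv a.g t, by linarith [mul_self_pos.2 ht]⟩
  refine isPassable_of_inner_nonpos (v := ε • tanPt t) hf.contDiff_one _ (norm_sphPt t) ?_ ?_
  · rw [coe_closedDiscPt, inner_smul_right, inner_sphPt_tanPt, mul_zero]
  · rwa [coe_closedDiscPt, map_smul, htan, smul_eq_mul]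

lemma isPassable_or_isStrictLocalMin (hf : IsExtension a f) (hpos : ∀ i, a.ν i = 1)
    (x : Metric.closedBall (0 : E2) 1) (hx : (x : E2) ∉ critPts f) :
    IsPassable (fun y : Metric.closedBall (0 : E2) 1 ↦ f y) x ∨
      IsStrictLocalMin (fun y : Metric.closedBall (0 : E2) 1 ↦ f y) x := by
  rcases (mem_closedBall_zero_iff.1 x.2).lt_or_eq with hlt | hnorm
  · have hball : (x : E2) ∈ Metric.ball (0 : E2) 1 := mem_ball_zero_iff.2 hlt
    exact .inl (isPassable_of_mem_interior (convex_closedBall _ _) hf.contDiff_one x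
      (Metric.ball_subset_interior_closedBall hball) fun h ↦ hx ⟨hball, h⟩)
  obtain ⟨t, rfl⟩ := eq_closedDiscPt_of_norm_eq_one hnorm
  by_cases hderiv : deriv a.g t = 0
  · obtain ⟨m, rfl⟩ := a.exists_eq_node_of_deriv_g_eq_zero hderiv
    exact (a.isMinNode_or_isMaxNode m).symm.imp (hf.isPassable_of_isMaxNode hpos)
      (hf.isStrictLocalMin_of_isMinNode hpos)
  · exact .inl (hf.isPassable_of_deriv_g_ne_zero hderiv)

lemma joinedIn_pred_succ_of_isMaxNode (hf : IsExtension a f) (hpos : ∀ i, a.ν i = 1)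
    (hm : a.IsMaxNode m) :
    JoinedIn {x : Metric.closedBall (0 : E2) 1 | f x < a.g (a.node m)}
      (closedDiscPt (a.node (m - 1))) (closedDiscPt (a.node (m + 1))) := by
  have hjoin := (hf.isPassable_of_isMaxNode hpos hm).joinedIn_of_curve continuous_closedDiscPt
    (a.strictMono_node (sub_one_lt m)) (a.strictMono_node (lt_add_one m)) fun t ht hne ↦ by
      simpa only [hf.apply_closedDiscPt] using hm.g_lt_g_node ht hne
  simpa only [hf.apply_closedDiscPt] using hjoin

lemma exists_mem_critPts_of_joinedIn (hf : IsExtension a f) (hpos : ∀ i, a.ν i = 1)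
    (hm : a.IsMinNode m) {s M : ℝ} (hlt : a.g s < a.g (a.node m))
    (h : JoinedIn {x : Metric.closedBall (0 : E2) 1 | f x < M} (closedDiscPt (a.node m))
      (closedDiscPt s)) : ∃ x ∈ critPts f, a.g (a.node m) ≤ f x ∧ f x < M := by
  have := (convex_closedBall (0 : E2) 1).locallyPathConnectedSpace
  have hcont : Continuous fun y : Metric.closedBall (0 : E2) 1 ↦ f y :=
    hf.contDiff_one.continuous.comp continuous_subtype_val
  obtain ⟨x, hle, hlt, hmin, hpass⟩ := exists_not_isPassable_of_joinedIn hcont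
    (hf.isStrictLocalMin_of_isMinNode hpos hm) (by simpa only [hf.apply_closedDiscPt] using hlt.le)
    (fun h ↦ hlt.ne (by rw [← hf.apply_closedDiscPt, h, hf.apply_closedDiscPt])) h
  refine ⟨x, ?_, by rwa [hf.apply_closedDiscPt] at hle, hlt⟩
  by_contra hx
  exact (hf.isPassable_or_isStrictLocalMin hpos x hx).elim hpass hmin

lemma exists_mem_critPts_of_isMaxNode (hf : IsExtension a f) (hpos : ∀ i, a.ν i = 1) (hn : 3 ≤ n)
    (hm : a.IsMaxNode m) : ∃ x ∈ critPts f,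
      max (a.g (a.node (m - 1))) (a.g (a.node (m + 1))) ≤ f x ∧ f x < a.g (a.node m) := by
  have hjoin := hf.joinedIn_pred_succ_of_isMaxNode hpos hm
  have hne : a.g (a.node (m - 1)) ≠ a.g (a.node (m + 1)) := fun h ↦ by
    have := Int.le_of_dvd (by omega) (Int.ModEq.dvd (a.emod_eq_of_g_node_eq h))
    omega
  rcases hne.lt_or_gt with hlt | hlt
  · rw [max_eq_right hlt.le]
    exact hf.exists_mem_critPts_of_joinedIn hpos hm.succ.1 hlt hjoin.symm
  · rw [max_eq_left hlt.le]
    exact hf.exists_mem_critPts_of_joinedIn hpos hm.isMinNode_sub_one hlt hjoin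

lemma exists_mem_critPts_uIcc (hf : IsExtension a f) (hpos : ∀ i, a.ν i = 1) (hn : 3 ≤ n) (m : ℤ) :
    ∃ x ∈ critPts f, f x ∈ uIcc (a.g (a.node m)) (a.g (a.node (m + 1))) := by
  rcases a.isMinNode_or_isMaxNode m with hm | hm
  · obtain ⟨x, hx, hle, hlt⟩ := hf.exists_mem_critPts_of_isMaxNode hpos hn hm.succ.1
    rw [add_sub_cancel_right] at hle
    exact ⟨x, hx, Icc_subset_uIcc ⟨(le_max_left _ _).trans hle, hlt.le⟩⟩
  · obtain ⟨x, hx, hle, hlt⟩ := hf.exists_mem_critPts_of_isMaxNode hpos hn hm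
    exact ⟨x, hx, Icc_subset_uIcc' ⟨(le_max_right _ _).trans hle, hlt.le⟩⟩

theorem clusterNumber_le_encard (hf : IsExtension a f) (hpos : ∀ i, a.ν i = 1) (hn : 3 ≤ n) :
    (clusterNumber a : ℕ∞) ≤ (f '' critPts f).encard := by
  rcases (f '' critPts f).finite_or_infinite with hfin | hinf
  · rw [hfin.encard_eq_coe_toFinset_card, Nat.cast_le]
    refine Nat.sInf_le ⟨hfin.toFinset, rfl, fun i ↦ ?_⟩
    obtain ⟨x, hx, hxi⟩ := hf.exists_mem_critPts_uIcc hpos hn i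
    rw [a.node_coe, a.apply_node a.periodic_g, a.nodeIndex_coe_add_one] at hxi
    exact ⟨f x, hfin.mem_toFinset.2 (mem_image_of_mem f hx), hxi⟩
  · simp [hinf.encard_eq]

end IsExtension

end LowerBound

section Perturbation

lemma exists_card_le_forall_exists_mem_Ioo {ι α : Type*} [Finite ι] [LinearOrder α]
    [DenselyOrdered α] [NoMinOrder α] [NoMaxOrder α] {lo hi : ι → α} (hne : ∀ i j, lo i ≠ hi j)
    {A : Finset α} (hA : ∀ i, ∃ x ∈ A, x ∈ Icc (lo i) (hi i)) :
    ∃ A' : Finset α, A'.card ≤ A.card ∧ ∀ i, ∃ x ∈ A', x ∈ Ioo (lo i) (hi i) := by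
  have := Fintype.ofFinite ι
  have hmove (x : α) : ∃ y, (∀ i, lo i ≤ x → lo i < y) ∧ ∀ i, x ≤ hi i → y < hi i := by
    obtain ⟨y, hlo, hhi⟩ := Order.exists_between_finsets (nonem := ⟨x⟩)
      (({i | lo i ≤ x} : Finset ι).image lo) (({i | x ≤ hi i} : Finset ι).image hi) (by
        simp only [Finset.forall_mem_image, Finset.mem_filter_univ]
        exact fun i hi j hj ↦ (hi.trans hj).lt_of_ne (hne i j))
    simp only [Finset.forall_mem_image, Finset.mem_filter_univ] at hlo hhi
    exact ⟨y, fun i ↦ @hlo i, fun i ↦ @hhi i⟩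
  choose move hlo hhi using hmove
  refine ⟨A.image move, Finset.card_image_le, fun i ↦ ?_⟩
  obtain ⟨x, hx, hxi⟩ := hA i
  exact ⟨move x, Finset.mem_image_of_mem _ hx, hlo x i hxi.1, hhi x i hxi.2⟩

end Perturbation

section SmoothStep

variable {u v t : ℝ}

/-- A smooth function that increases from `0` to `1` between `u` and `v` and is constant outside,
for `u < v`. -/
def smoothStep (u v t : ℝ) : ℝ := Real.smoothTransition ((t - u) / (v - u))

lemma contDiff_smoothStep {n : ℕ∞} (u v : ℝ) : ContDiff ℝ n (smoothStep u v) :=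
  Real.smoothTransition.contDiff.comp ((contDiff_id.sub contDiff_const).div_const _)

lemma differentiable_smoothStep (u v : ℝ) : Differentiable ℝ (smoothStep u v) :=
  (contDiff_smoothStep (n := 1) u v).differentiable one_ne_zero

lemma smoothStep_of_le (huv : u ≤ v) (ht : t ≤ u) : smoothStep u v t = 0 :=
  Real.smoothTransition.zero_of_nonpos
    (div_nonpos_of_nonpos_of_nonneg (sub_nonpos.2 ht) (sub_nonneg.2 huv))

lemma smoothStep_of_ge (huv : u < v) (ht : v ≤ t) : smoothStep u v t = 1 :=
  Real.smoothTransition.one_of_one_le ((one_le_div (sub_pos.2 huv)).2 (by linarith))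

lemma smoothStep_nonneg (u v t : ℝ) : 0 ≤ smoothStep u v t := Real.smoothTransition.nonneg _

lemma smoothStep_pos (huv : u < v) (ht : u < t) : 0 < smoothStep u v t :=
  Real.smoothTransition.pos_of_pos (div_pos (sub_pos.2 ht) (sub_pos.2 huv))

lemma smoothStep_le_one (u v t : ℝ) : smoothStep u v t ≤ 1 := Real.smoothTransition.le_one _

lemma monotone_smoothStep (huv : u ≤ v) : Monotone (smoothStep u v) := fun _ _ h ↦
  Real.smoothTransition.monotone
    (div_le_div_of_nonneg_right (sub_le_sub_right h u) (sub_nonneg.2 huv))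

lemma smoothStep_add_add (u v t P : ℝ) : smoothStep (u + P) (v + P) (t + P) = smoothStep u v t := by
  simp only [smoothStep, add_sub_add_right_eq_sub]

lemma hasDerivAt_expNegInvGlue (x : ℝ) :
    HasDerivAt expNegInvGlue (x⁻¹ ^ 2 * expNegInvGlue x) x := by
  simpa using expNegInvGlue.hasDerivAt_polynomial_eval_inv_mul 1 x

lemma deriv_smoothTransition_pos (ht : t ∈ Ioo 0 1) : 0 < deriv Real.smoothTransition t := by
  have hsub : 0 < 1 - t := sub_pos.2 ht.2
  have hp := expNegInvGlue.pos_of_pos ht.1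
  have hq := expNegInvGlue.pos_of_pos hsub
  have hreflect := (hasDerivAt_expNegInvGlue (1 - t)).comp_const_sub 1 t
  have hquot : HasDerivAt Real.smoothTransition _ t :=
    (hasDerivAt_expNegInvGlue t).div ((hasDerivAt_expNegInvGlue t).add hreflect) (by positivity)
  rw [hquot.deriv]
  refine div_pos ?_ (by positivity)
  have hnum : 0 < expNegInvGlue t * expNegInvGlue (1 - t) * (t⁻¹ ^ 2 + (1 - t)⁻¹ ^ 2) := by
    have := inv_pos.2 ht.1
    positivity
  linear_combination hnum

lemma deriv_smoothStep_pos (ht : t ∈ Ioo u v) : 0 < deriv (smoothStep u v) t := by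
  have hvu : 0 < v - u := sub_pos.2 (ht.1.trans ht.2)
  have hd := (Real.smoothTransition.contDiff (n := 1)).differentiable one_ne_zero
  have hcomp : HasDerivAt (smoothStep u v) _ t :=
    (hd _).hasDerivAt.comp t (((hasDerivAt_id t).sub_const u).div_const (v - u))
  rw [hcomp.deriv]
  refine mul_pos (deriv_smoothTransition_pos ⟨div_pos (sub_pos.2 ht.1) hvu, ?_⟩) (by positivity)
  exact (div_lt_one hvu).2 (sub_lt_sub_right ht.2 u)

lemma deriv_smoothStep_of_le (huv : u ≤ v) (ht : t ≤ u) : deriv (smoothStep u v) t = 0 :=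
  IsLocalMin.deriv_eq_zero <| .of_forall fun s ↦ by
    rw [smoothStep_of_le huv ht]
    exact smoothStep_nonneg u v s

lemma deriv_smoothStep_of_ge (huv : u < v) (ht : v ≤ t) : deriv (smoothStep u v) t = 0 :=
  IsLocalMax.deriv_eq_zero <| .of_forall fun s ↦ by
    rw [smoothStep_of_ge huv ht]
    exact smoothStep_le_one u v s

end SmoothStep

section StepInterpolation

variable {T b : ℤ → ℝ} {m : ℤ} {t : ℝ}

/-- The `m` with `t ∈ [T m, T (m + 1))`, for strictly increasing knots `T` that exhaust `ℝ`. -/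
def knotIndex (T : ℤ → ℝ) (t : ℝ) : ℤ := Classical.epsilon fun m ↦ t ∈ Ico (T m) (T (m + 1))

/-- The smooth function that takes the value `b m` at the knot `T m`, where all its derivatives
vanish, and is strictly monotone or constant between consecutive knots. -/
def stepInterp (T b : ℤ → ℝ) (t : ℝ) : ℝ :=
  b (knotIndex T t) + (b (knotIndex T t + 1) - b (knotIndex T t)) *
    smoothStep (T (knotIndex T t)) (T (knotIndex T t + 1)) t

lemma knotIndex_eq (hT : StrictMono T) (ht : t ∈ Ico (T m) (T (m + 1))) : knotIndex T t = m := by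
  have hk : t ∈ Ico (T (knotIndex T t)) (T (knotIndex T t + 1)) :=
    Classical.epsilon_spec (p := fun m ↦ t ∈ Ico (T m) (T (m + 1))) ⟨m, ht⟩
  have h₁ := hT.lt_iff_lt.1 (hk.1.trans_lt ht.2)
  have h₂ := hT.lt_iff_lt.1 (ht.1.trans_lt hk.2)
  omega

lemma stepInterp_of_mem_Ico (hT : StrictMono T) (ht : t ∈ Ico (T m) (T (m + 1))) :
    stepInterp T b t = b m + (b (m + 1) - b m) * smoothStep (T m) (T (m + 1)) t := by
  rw [stepInterp, knotIndex_eq hT ht]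

lemma stepInterp_knot (hT : StrictMono T) (m : ℤ) : stepInterp T b (T m) = b m := by
  have hlt := hT (lt_add_one m)
  rw [stepInterp_of_mem_Ico hT ⟨le_rfl, hlt⟩, smoothStep_of_le hlt.le le_rfl, mul_zero, add_zero]

lemma periodic_stepInterp (hT : StrictMono T) (hcov : ∀ t, ∃ m, t ∈ Ico (T m) (T (m + 1)))
    {N : ℤ} {P : ℝ} (hTP : ∀ m, T (m + N) = T m + P) (hbN : Function.Periodic b N) :
    Function.Periodic (stepInterp T b) P := fun t ↦ by
  obtain ⟨m, ht⟩ := hcov t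
  have hsucc : T (m + N + 1) = T (m + 1) + P := by rw [add_right_comm, hTP]
  have htP : t + P ∈ Ico (T (m + N)) (T (m + N + 1)) := by
    rw [hTP, hsucc]
    exact ⟨add_le_add_left ht.1 P, add_lt_add_left ht.2 P⟩
  rw [stepInterp_of_mem_Ico hT ht, stepInterp_of_mem_Ico hT htP, hbN, add_right_comm m N 1, hbN,
    hTP, hTP, smoothStep_add_add]

lemma stepInterp_eventuallyEq (hT : StrictMono T) (ht : t ∈ Ioo (T (m - 1)) (T (m + 1))) :
    stepInterp T b =ᶠ[𝓝 t] fun s ↦ b m + (b (m + 1) - b m) * smoothStep (T m) (T (m + 1)) s +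
      (b m - b (m - 1)) * (smoothStep (T (m - 1)) (T m) s - 1) := by
  have hpred := hT (sub_one_lt m)
  have hsucc := hT (lt_add_one m)
  filter_upwards [Ioo_mem_nhds ht.1 ht.2] with s hs
  rcases lt_or_ge s (T m) with hlt | hge
  · rw [stepInterp_of_mem_Ico hT (m := m - 1) ⟨hs.1.le, by rwa [sub_add_cancel]⟩, sub_add_cancel,
      smoothStep_of_le hsucc.le hlt.le]
    ring
  · rw [stepInterp_of_mem_Ico hT ⟨hge, hs.2⟩, smoothStep_of_ge hpred hge]
    ring

lemma mem_Ioo_sub_one_of_mem_Ico (hT : StrictMono T) (ht : t ∈ Ico (T m) (T (m + 1))) :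
    t ∈ Ioo (T (m - 1)) (T (m + 1)) := ⟨(hT (sub_one_lt m)).trans_le ht.1, ht.2⟩

lemma contDiff_stepInterp {n : ℕ∞} (hT : StrictMono T)
    (hcov : ∀ t, ∃ m, t ∈ Ico (T m) (T (m + 1))) : ContDiff ℝ n (stepInterp T b) := by
  refine contDiff_iff_contDiffAt.2 fun t ↦ ?_
  obtain ⟨m, ht⟩ := hcov t
  refine ContDiffAt.congr_of_eventuallyEq (ContDiff.contDiffAt ?_)
    (stepInterp_eventuallyEq hT (mem_Ioo_sub_one_of_mem_Ico hT ht))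
  have h₁ := contDiff_smoothStep (n := n) (T m) (T (m + 1))
  have h₂ := contDiff_smoothStep (n := n) (T (m - 1)) (T m)
  fun_prop

lemma deriv_stepInterp (hT : StrictMono T) (ht : t ∈ Ico (T m) (T (m + 1))) :
    deriv (stepInterp T b) t = (b (m + 1) - b m) * deriv (smoothStep (T m) (T (m + 1))) t := by
  rw [(stepInterp_eventuallyEq hT (mem_Ioo_sub_one_of_mem_Ico hT ht)).deriv_eq]
  have h₁ := (differentiable_smoothStep (T m) (T (m + 1)) t).hasDerivAt
  have h₂ := (differentiable_smoothStep (T (m - 1)) (T m) t).hasDerivAt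
  rw [deriv_smoothStep_of_ge (hT (sub_one_lt m)) ht.1] at h₂
  simpa using (((h₁.const_mul (b (m + 1) - b m)).const_add (b m)).fun_add
    ((h₂.sub_const 1).const_mul (b m - b (m - 1)))).deriv

lemma stepInterp_eq_of_deriv_eq_zero (hT : StrictMono T) (ht : t ∈ Ico (T m) (T (m + 1)))
    (hderiv : deriv (stepInterp T b) t = 0) : stepInterp T b t = b m := by
  rcases ht.1.eq_or_lt with rfl | hlt
  · exact stepInterp_knot hT m
  · rw [deriv_stepInterp hT ht] at hderiv
    rw [stepInterp_of_mem_Ico hT ht,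
      (mul_eq_zero.1 hderiv).resolve_right (deriv_smoothStep_pos ⟨hlt, ht.2⟩).ne']
    ring

end StepInterpolation

section Barrier

namespace Ribbon

variable {n : ℕ} {a : Ribbon n} {A : Finset ℝ} {m k : ℤ} {t : ℝ}

lemma isMaxNode_add_card : a.IsMaxNode (m + n) ↔ a.IsMaxNode m := by
  rw [IsMaxNode, IsMaxNode, a.apply_node a.periodic_deriv_deriv_g,
    a.apply_node a.periodic_deriv_deriv_g, ← mul_one (n : ℤ), a.nodeIndex_add_mul]

lemma g_node_ne (hm : a.IsMinNode m) (hk : a.IsMaxNode k) : a.g (a.node m) ≠ a.g (a.node k) := by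
  intro h
  rw [a.apply_node a.periodic_g, a.apply_node a.periodic_g] at h
  rw [IsMinNode, a.apply_node a.periodic_deriv_deriv_g] at hm
  rw [IsMaxNode, a.apply_node a.periodic_deriv_deriv_g, ← a.values_distinct _ _ h] at hk
  exact hm.not_gt hk

variable (a) in
lemma g_node_lt_or_gt (m : ℤ) :
    (a.IsMinNode m ∧ a.IsMaxNode (m + 1) ∧ a.g (a.node m) < a.g (a.node (m + 1))) ∨
    (a.IsMaxNode m ∧ a.IsMinNode (m + 1) ∧ a.g (a.node (m + 1)) < a.g (a.node m)) := by
  have hlt := a.node_lt_node_add_one m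
  exact (a.strictMonoOn_or_strictAntiOn_g_arc m).imp
    (fun h ↦ ⟨h.1, h.2.1, h.2.2 (left_mem_Icc.2 hlt.le) (right_mem_Icc.2 hlt.le) hlt⟩)
    (fun h ↦ ⟨h.1, h.2.1, h.2.2 (left_mem_Icc.2 hlt.le) (right_mem_Icc.2 hlt.le) hlt⟩)

/-- `A` meets the open interval between the levels of any two adjacent nodes. -/
def IsOpenCluster (a : Ribbon n) (A : Finset ℝ) : Prop :=
  ∀ m : ℤ, ∃ x ∈ A, x ∈ uIoo (a.g (a.node m)) (a.g (a.node (m + 1)))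

lemma exists_isOpenCluster
    (hA : ∀ i : Fin n, ∃ x ∈ A, x ∈ uIcc (a.g (a.θ i)) (a.g (a.θ (a.next i)))) :
    ∃ A' : Finset ℝ, A'.card ≤ A.card ∧ a.IsOpenCluster A' := by
  have hne (i j : Fin n) : a.g (a.node i) ⊓ a.g (a.node (i + 1)) ≠
      a.g (a.node j) ⊔ a.g (a.node (j + 1)) := by
    rcases a.g_node_lt_or_gt i with ⟨hi, -, hlt⟩ | ⟨-, hi, hlt⟩ <;>
    rcases a.g_node_lt_or_gt j with ⟨-, hj, hlt'⟩ | ⟨hj, -, hlt'⟩ <;>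
    simpa only [inf_eq_left.2 hlt.le, inf_eq_right.2 hlt.le, sup_eq_left.2 hlt'.le,
      sup_eq_right.2 hlt'.le] using g_node_ne hi hj
  obtain ⟨A', hcard, hA'⟩ := exists_card_le_forall_exists_mem_Ioo hne fun i ↦ by
    simpa only [a.apply_node a.periodic_g, a.nodeIndex_coe_add_one, a.nodeIndex_coe, uIcc]
      using hA i
  refine ⟨A', hcard, fun m ↦ ?_⟩
  obtain ⟨x, hx, hxm⟩ := hA' (a.nodeIndex m)
  have hshift (j : ℤ) : a.g (a.node (a.nodeIndex m + j)) = a.g (a.node (m + j)) := by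
    rw [a.apply_node a.periodic_g, ← a.nodeIndex_add_mul _ (m / n), add_right_comm,
      coe_nodeIndex_add_mul_ediv, a.apply_node a.periodic_g]
  have hzero := hshift 0
  rw [add_zero, add_zero] at hzero
  rw [hzero, hshift] at hxm
  exact ⟨x, hx, hxm⟩

/-- The value of the barrier at a node: the largest element of `A` below the level of a maximum
node, respectively the smallest element above the level of a minimum node. -/
def barrierLevel (a : Ribbon n) (A : Finset ℝ) (m : ℤ) : ℝ :=
  open Classical in
  if a.IsMaxNode m then sSup {x ∈ (A : Set ℝ) | x < a.g (a.node m)}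
  else sInf {x ∈ (A : Set ℝ) | a.g (a.node m) < x}

lemma IsMaxNode.isGreatest_barrierLevel (hm : a.IsMaxNode m) (hA : a.IsOpenCluster A) :
    IsGreatest {x ∈ (A : Set ℝ) | x < a.g (a.node m)} (a.barrierLevel A m) := by
  have hfin : {x ∈ (A : Set ℝ) | x < a.g (a.node m)}.Finite := A.finite_toSet.sep _
  have hlt := ((a.g_node_lt_or_gt m).resolve_left fun h ↦ hm.not_isMinNode h.1).2.2
  obtain ⟨x, hx, hxm⟩ := hA m
  rw [uIoo_of_gt hlt] at hxm
  rw [barrierLevel, if_pos hm]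
  exact ⟨Set.Nonempty.csSup_mem ⟨x, hx, hxm.2⟩ hfin, fun y hy ↦ le_csSup hfin.bddAbove hy⟩

lemma IsMinNode.isLeast_barrierLevel (hm : a.IsMinNode m) (hA : a.IsOpenCluster A) :
    IsLeast {x ∈ (A : Set ℝ) | a.g (a.node m) < x} (a.barrierLevel A m) := by
  have hfin : {x ∈ (A : Set ℝ) | a.g (a.node m) < x}.Finite := A.finite_toSet.sep _
  have hlt := ((a.g_node_lt_or_gt m).resolve_right fun h ↦ h.1.not_isMinNode hm).2.2
  obtain ⟨x, hx, hxm⟩ := hA m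
  rw [uIoo_of_lt hlt] at hxm
  rw [barrierLevel, if_neg fun h ↦ h.not_isMinNode hm]
  exact ⟨Set.Nonempty.csInf_mem ⟨x, hx, hxm.1⟩ hfin, fun y hy ↦ csInf_le hfin.bddBelow hy⟩

lemma IsOpenCluster.barrierLevel_mem (hA : a.IsOpenCluster A) (m : ℤ) : a.barrierLevel A m ∈ A :=
  (a.isMinNode_or_isMaxNode m).elim (fun hm ↦ (hm.isLeast_barrierLevel hA).1.1)
    fun hm ↦ (hm.isGreatest_barrierLevel hA).1.1

lemma IsOpenCluster.barrierLevel_le (hA : a.IsOpenCluster A) (hm : a.IsMinNode m)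
    (hk : a.IsMaxNode k) (hmk : ∃ x ∈ A, x ∈ Ioo (a.g (a.node m)) (a.g (a.node k))) :
    a.barrierLevel A m ≤ a.barrierLevel A k := by
  obtain ⟨x, hx, hxm, hxk⟩ := hmk
  exact ((hm.isLeast_barrierLevel hA).2 ⟨hx, hxm⟩).trans
    ((hk.isGreatest_barrierLevel hA).2 ⟨hx, hxk⟩)

variable (a A) in
lemma periodic_barrierLevel : Function.Periodic (a.barrierLevel A) n := fun m ↦ by
  have hg : a.g (a.node (m + n)) = a.g (a.node m) := by
    simpa using congr(a.g $(a.node_add_mul m 1)).trans (a.periodic_g.int_mul 1 _)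
  rw [barrierLevel, barrierLevel, hg]
  classical exact if_congr isMaxNode_add_card rfl rfl

/-- A smooth boundary function that passes strictly below the maxima and above the minima of `g`,
is monotone in the same direction as `g` on each arc, and has its critical values in `A`. -/
def barrier (a : Ribbon n) (A : Finset ℝ) : ℝ → ℝ := stepInterp a.node (a.barrierLevel A)

variable (a A) in
lemma contDiff_barrier : ContDiff ℝ (⊤ : ℕ∞) (a.barrier A) :=
  contDiff_stepInterp a.strictMono_node a.exists_mem_Ico_node

variable (a A) in
lemma periodic_barrier : Function.Periodic (a.barrier A) (2 * Real.pi) :=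
  periodic_stepInterp a.strictMono_node a.exists_mem_Ico_node
    (fun m ↦ by simpa using a.node_add_mul m 1) (a.periodic_barrierLevel A)

lemma IsMaxNode.barrier_lt (hm : a.IsMaxNode m) (hA : a.IsOpenCluster A) :
    a.barrier A (a.node m) < a.g (a.node m) := by
  rw [barrier, stepInterp_knot a.strictMono_node]
  exact (hm.isGreatest_barrierLevel hA).1.2

lemma IsMinNode.lt_barrier (hm : a.IsMinNode m) (hA : a.IsOpenCluster A) :
    a.g (a.node m) < a.barrier A (a.node m) := by
  rw [barrier, stepInterp_knot a.strictMono_node]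
  exact (hm.isLeast_barrierLevel hA).1.2

lemma IsOpenCluster.barrier_mem_of_deriv_eq_zero (hA : a.IsOpenCluster A)
    (ht : deriv (a.barrier A) t = 0) : a.barrier A t ∈ A := by
  obtain ⟨m, hm⟩ := a.exists_mem_Ico_node t
  rw [barrier, stepInterp_eq_of_deriv_eq_zero a.strictMono_node hm ht]
  exact hA.barrierLevel_mem m

lemma IsOpenCluster.barrier_ne_g (hA : a.IsOpenCluster A) (ht : deriv a.g t = 0) :
    a.barrier A t ≠ a.g t := by
  obtain ⟨m, rfl⟩ := a.exists_eq_node_of_deriv_g_eq_zero ht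
  exact (a.isMinNode_or_isMaxNode m).elim (fun hm ↦ (hm.lt_barrier hA).ne')
    fun hm ↦ (hm.barrier_lt hA).ne

lemma IsOpenCluster.deriv_barrier_mul_deriv_g_nonneg (hA : a.IsOpenCluster A) (t : ℝ) :
    0 ≤ deriv (a.barrier A) t * deriv a.g t := by
  obtain ⟨m, ht⟩ := a.exists_mem_Ico_node t
  have hlt := a.node_lt_node_add_one m
  have hstep := (monotone_smoothStep hlt.le).deriv_nonneg (x := t)
  have hwithin := (a.differentiable_g t).derivWithin
    (uniqueDiffOn_Icc hlt t (Ico_subset_Icc_self ht))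
  rw [barrier, deriv_stepInterp a.strictMono_node ht]
  obtain ⟨x, hx, hxm⟩ := hA m
  rcases a.strictMonoOn_or_strictAntiOn_g_arc m with ⟨hm, hk, hg⟩ | ⟨hm, hk, hg⟩
  · rw [uIoo_of_lt (hg (left_mem_Icc.2 hlt.le) (right_mem_Icc.2 hlt.le) hlt)] at hxm
    refine mul_nonneg (mul_nonneg ?_ hstep) (hwithin ▸ hg.monotoneOn.derivWithin_nonneg)
    exact sub_nonneg.2 (hA.barrierLevel_le hm hk ⟨x, hx, hxm⟩)
  · rw [uIoo_of_gt (hg (left_mem_Icc.2 hlt.le) (right_mem_Icc.2 hlt.le) hlt)] at hxm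
    refine mul_nonneg_of_nonpos_of_nonpos (mul_nonpos_of_nonpos_of_nonneg ?_ hstep)
      (hwithin ▸ hg.antitoneOn.derivWithin_nonpos)
    exact sub_nonpos.2 (hA.barrierLevel_le hk hm ⟨x, hx, hxm⟩)

end Ribbon

end Barrier

section DiscExtension

variable {c r : ℝ} {g h : ℝ → ℝ} {A : Set ℝ}

/-- The function on the plane that equals `c` near the origin, interpolates between `c` and `h` for
radii in `[1/4, 1/2]` and between `h` and `g` for radii in `[1/2, 1]`. -/
def discExtension (c : ℝ) (g h : ℝ → ℝ) (x : E2) : ℝ :=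
  c + smoothStep (1 / 4) (1 / 2) ‖x‖ * (angular h x - c) +
    2 * smoothStep (1 / 2) (3 / 2) ‖x‖ * (angular g x - angular h x)

lemma smoothStep_half_three_halves_one : smoothStep (1 / 2) (3 / 2) 1 = 1 / 2 := by
  have hpos := expNegInvGlue.pos_of_pos (half_pos one_pos : (0 : ℝ) < 1 / 2)
  have harg : (1 - 1 / 2) / (3 / 2 - 1 / 2) = (1 / 2 : ℝ) := by norm_num
  rw [smoothStep, harg, Real.smoothTransition, sub_half]
  field_simp
  norm_num

lemma discExtension_of_norm_le {x : E2} (hx : ‖x‖ ≤ 1 / 4) : discExtension c g h x = c := by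
  rw [discExtension, smoothStep_of_le (by norm_num) hx,
    smoothStep_of_le (by norm_num) (by linarith)]
  ring

lemma discExtension_smul_sphPt (hg : Function.Periodic g (2 * Real.pi))
    (hh : Function.Periodic h (2 * Real.pi)) (hr : 0 < r) (t : ℝ) :
    discExtension c g h (r • sphPt t) = c + smoothStep (1 / 4) (1 / 2) r * (h t - c) +
      2 * smoothStep (1 / 2) (3 / 2) r * (g t - h t) := by
  rw [discExtension, norm_smul_sphPt hr.le, angular_smul_sphPt hg hr, angular_smul_sphPt hh hr]

lemma discExtension_sphPt (hg : Function.Periodic g (2 * Real.pi))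
    (hh : Function.Periodic h (2 * Real.pi)) (t : ℝ) : discExtension c g h (sphPt t) = g t := by
  have := discExtension_smul_sphPt (c := c) hg hh one_pos t
  rw [one_smul, smoothStep_half_three_halves_one, smoothStep_of_ge (by norm_num) (by norm_num)]
    at this
  linarith

lemma contDiff_discExtension (hg : Function.Periodic g (2 * Real.pi))
    (hh : Function.Periodic h (2 * Real.pi)) {n : ℕ∞} (hgs : ContDiff ℝ n g)
    (hhs : ContDiff ℝ n h) : ContDiff ℝ n (discExtension c g h) := by
  refine contDiff_iff_contDiffAt.2 fun x ↦ ?_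
  rcases eq_or_ne x 0 with rfl | hx
  · refine contDiffAt_const.congr_of_eventuallyEq (f := fun _ ↦ c) ?_
    filter_upwards [Metric.closedBall_mem_nhds (0 : E2) (by norm_num : (0 : ℝ) < 1 / 4)] with y hy
    exact discExtension_of_norm_le (mem_closedBall_zero_iff.1 hy)
  · have hnorm := contDiffAt_norm ℝ hx (n := n)
    have hstep (u v : ℝ) : ContDiffAt ℝ n (fun y : E2 ↦ smoothStep u v ‖y‖) x :=
      (contDiff_smoothStep u v).contDiffAt.comp x hnorm
    have hga := contDiffAt_angular hg hgs hx
    have hha := contDiffAt_angular hh hhs hx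
    exact (contDiffAt_const.add ((hstep _ _).mul (hha.sub contDiffAt_const))).add
      ((contDiffAt_const.mul (hstep _ _)).mul (hga.sub hha))

variable (hg : Function.Periodic g (2 * Real.pi)) (hh : Function.Periodic h (2 * Real.pi))
  (hgs : ContDiff ℝ 1 g) (hhs : ContDiff ℝ 1 h)

include hg hh hgs hhs

lemma differentiable_discExtension : Differentiable ℝ (discExtension c g h) :=
  (contDiff_discExtension (n := 1) hg hh hgs hhs).differentiable one_ne_zero

lemma fderiv_discExtension_tanPt (hr : 0 < r) (t : ℝ) :
    r * fderiv ℝ (discExtension c g h) (r • sphPt t) (tanPt t) =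
      smoothStep (1 / 4) (1 / 2) r * deriv h t +
        2 * smoothStep (1 / 2) (3 / 2) r * (deriv g t - deriv h t) := by
  have hder := hasDerivAt_comp_smul_sphPt_angle
    (differentiable_discExtension (c := c) hg hh hgs hhs) r t
  simp only [discExtension_smul_sphPt hg hh hr] at hder
  have hg' := (hgs.differentiable one_ne_zero t).hasDerivAt
  have hh' := (hhs.differentiable one_ne_zero t).hasDerivAt
  exact hder.unique ((((hh'.sub_const c).const_mul _).const_add c).add
    ((hg'.sub hh').const_mul _))

lemma fderiv_discExtension_sphPt (hr : 0 < r) (t : ℝ) :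
    fderiv ℝ (discExtension c g h) (r • sphPt t) (sphPt t) =
      deriv (smoothStep (1 / 4) (1 / 2)) r * (h t - c) +
        2 * deriv (smoothStep (1 / 2) (3 / 2)) r * (g t - h t) := by
  have hder := hasDerivAt_comp_smul_sphPt_radius
    (differentiable_discExtension (c := c) hg hh hgs hhs) r t
  have hstep (u v : ℝ) := (differentiable_smoothStep u v r).hasDerivAt
  refine hder.unique (HasDerivAt.congr_of_eventuallyEq ((((hstep _ _).mul_const _).const_add c).add
    (((hstep _ _).const_mul 2).mul_const _)) ?_)
  filter_upwards [lt_mem_nhds hr] with s hs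
  exact discExtension_smul_sphPt hg hh hs t

lemma fderiv_discExtension_ne_zero (hmono : ∀ t, 0 ≤ deriv h t * deriv g t)
    (hne : ∀ t, deriv g t = 0 → h t ≠ g t) {x : E2} (hx : ‖x‖ ∈ Ioc (1 / 2) 1) :
    fderiv ℝ (discExtension c g h) x ≠ 0 := by
  intro hzero
  obtain ⟨t, ht⟩ := exists_eq_norm_smul_sphPt x
  set r := ‖x‖
  have hr : 0 < r := one_half_pos.trans hx.1
  rw [← ht] at hzero
  have htan := fderiv_discExtension_tanPt (c := c) hg hh hgs hhs hr t
  have hrad := fderiv_discExtension_sphPt (c := c) hg hh hgs hhs hr t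
  rw [hzero, zero_apply] at htan hrad
  rw [smoothStep_of_ge (by norm_num) hx.1.le] at htan
  rw [deriv_smoothStep_of_ge (by norm_num) hx.1.le] at hrad
  have hpos : 0 < smoothStep (1 / 2) (3 / 2) r := smoothStep_pos (by norm_num) hx.1
  have hle : smoothStep (1 / 2) (3 / 2) r ≤ 1 / 2 :=
    (monotone_smoothStep (by norm_num) hx.2).trans_eq smoothStep_half_three_halves_one
  have hsq : 2 * smoothStep (1 / 2) (3 / 2) r * deriv g t ^ 2 =
      -((1 - 2 * smoothStep (1 / 2) (3 / 2) r) * (deriv h t * deriv g t)) := by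
    linear_combination -deriv g t * htan
  have hgt : deriv g t = 0 := by
    have := mul_nonneg (by linarith : 0 ≤ 1 - 2 * smoothStep (1 / 2) (3 / 2) r) (hmono t)
    by_contra hgt
    have : 0 < 2 * smoothStep (1 / 2) (3 / 2) r * deriv g t ^ 2 := by positivity
    linarith
  have hstep : 0 < deriv (smoothStep (1 / 2) (3 / 2)) r :=
    deriv_smoothStep_pos ⟨hx.1, by linarith [hx.2]⟩
  rw [zero_mul, zero_add, eq_comm, mul_eq_zero] at hrad
  exact hne t hgt (sub_eq_zero.1 (hrad.resolve_left (by positivity))).symm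

lemma discExtension_mem_of_fderiv_eq_zero (hc : c ∈ A) (hA : ∀ t, deriv h t = 0 → h t ∈ A)
    {x : E2} (hx : ‖x‖ ≤ 1 / 2) (hzero : fderiv ℝ (discExtension c g h) x = 0) :
    discExtension c g h x ∈ A := by
  rcases le_or_gt ‖x‖ (1 / 4) with hx' | hx'
  · rwa [discExtension_of_norm_le hx']
  obtain ⟨t, ht⟩ := exists_eq_norm_smul_sphPt x
  set r := ‖x‖
  have hr : 0 < r := (by norm_num : (0 : ℝ) < 1 / 4).trans hx'
  rw [← ht] at hzero ⊢
  have htan := fderiv_discExtension_tanPt (c := c) hg hh hgs hhs hr t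
  have hrad := fderiv_discExtension_sphPt (c := c) hg hh hgs hhs hr t
  rw [hzero, zero_apply] at htan hrad
  rw [smoothStep_of_le (by norm_num) hx] at htan
  rw [deriv_smoothStep_of_le (by norm_num) hx] at hrad
  rw [discExtension_smul_sphPt hg hh hr, smoothStep_of_le (u := 1 / 2) (by norm_num) hx]
  rcases hx.lt_or_eq with hlt | heq
  · have hstep := deriv_smoothStep_pos (u := 1 / 4) (v := 1 / 2) ⟨hx', hlt⟩
    rw [mul_zero, zero_mul, add_zero, eq_comm, mul_eq_zero] at hrad
    rwa [hrad.resolve_left hstep.ne', mul_zero, mul_zero, zero_mul, add_zero, add_zero]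
  · have hstep := smoothStep_pos (u := 1 / 4) (v := 1 / 2) (by norm_num) hx'
    rw [mul_zero, mul_zero, zero_mul, add_zero, eq_comm, mul_eq_zero] at htan
    rw [smoothStep_of_ge (by norm_num) heq.ge, one_mul, add_sub_cancel, mul_zero, zero_mul,
      add_zero]
    exact hA t (htan.resolve_left hstep.ne')

lemma image_critPts_discExtension_subset (hc : c ∈ A) (hA : ∀ t, deriv h t = 0 → h t ∈ A)
    (hmono : ∀ t, 0 ≤ deriv h t * deriv g t) (hne : ∀ t, deriv g t = 0 → h t ≠ g t) :
    discExtension c g h '' critPts (discExtension c g h) ⊆ A := by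
  rintro _ ⟨x, ⟨hball, hzero⟩, rfl⟩
  refine discExtension_mem_of_fderiv_eq_zero hg hh hgs hhs hc hA (le_of_not_gt fun hx ↦ ?_) hzero
  exact fderiv_discExtension_ne_zero hg hh hgs hhs hmono hne
    ⟨hx, (mem_ball_zero_iff.1 hball).le⟩ hzero

lemma exists_pos_fderiv_discExtension_sphPt :
    ∃ κ > 0, ∀ t, fderiv ℝ (discExtension c g h) (sphPt t) (sphPt t) = κ * (g t - h t) := by
  refine ⟨2 * deriv (smoothStep (1 / 2) (3 / 2)) 1, ?_, fun t ↦ ?_⟩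
  · have := deriv_smoothStep_pos (u := 1 / 2) (v := 3 / 2) (t := 1) ⟨by norm_num, by norm_num⟩
    positivity
  · have hrad := fderiv_discExtension_sphPt (c := c) hg hh hgs hhs one_pos t
    rwa [one_smul, deriv_smoothStep_of_ge (by norm_num) (by norm_num), zero_mul, zero_add] at hrad

end DiscExtension

section UpperBound

variable {n : ℕ} {a : Ribbon n} {A : Finset ℝ}

lemma Ribbon.isExtension_discExtension (hpos : ∀ i, a.ν i = 1) (hA : a.IsOpenCluster A) (c : ℝ) :
    IsExtension a (discExtension c a.g (a.barrier A)) := by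
  have hbs := a.contDiff_barrier A
  have hg₁ := a.smooth_g.of_le (m := 1) (by exact_mod_cast le_top)
  have hb₁ := hbs.of_le (m := 1) (by exact_mod_cast le_top)
  have hbp := a.periodic_barrier A
  obtain ⟨κ, hκ, hrad⟩ := exists_pos_fderiv_discExtension_sphPt (c := c) a.periodic_g hbp hg₁ hb₁
  refine ⟨contDiff_discExtension a.periodic_g hbp a.smooth_g hbs,
    discExtension_sphPt a.periodic_g hbp, fun x hx ↦ ?_, fun i ↦ ⟨fun hi ↦ ?_, fun hi ↦ ?_⟩⟩
  · exact fderiv_discExtension_ne_zero a.periodic_g hbp hg₁ hb₁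
      hA.deriv_barrier_mul_deriv_g_nonneg (fun t ↦ hA.barrier_ne_g)
      (by rw [mem_sphere_zero_iff_norm.1 hx]; norm_num)
  all_goals
    rw [hpos, inner_gradient_left, hrad, Int.cast_one, one_mul]
    rw [← a.node_coe] at hi ⊢
  · exact mul_pos hκ (sub_pos.2 (IsMaxNode.barrier_lt hi hA))
  · exact mul_neg_of_pos_of_neg hκ (sub_neg.2 (IsMinNode.lt_barrier hi hA))

theorem exists_isExtension_encard_le (hpos : ∀ i, a.ν i = 1) :
    ∃ f, IsExtension a f ∧ (f '' critPts f).encard ≤ clusterNumber a := by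
  have hcluster : {k | ∃ A : Finset ℝ, A.card = k ∧
      ∀ i, ∃ x ∈ A, x ∈ uIcc (a.g (a.θ i)) (a.g (a.θ (a.next i)))}.Nonempty :=
    ⟨_, Finset.univ.image fun i ↦ a.g (a.θ i), rfl, fun i ↦
      ⟨_, Finset.mem_image_of_mem _ (Finset.mem_univ i), left_mem_uIcc⟩⟩
  obtain ⟨A, hcard, hA⟩ := Nat.sInf_mem hcluster
  obtain ⟨A', hcard', hA'⟩ := Ribbon.exists_isOpenCluster hA
  obtain ⟨c, hc, -⟩ := hA' 0
  refine ⟨_, Ribbon.isExtension_discExtension hpos hA' c, ?_⟩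
  calc _ ≤ (A' : Set ℝ).encard := encard_le_encard <|
        image_critPts_discExtension_subset a.periodic_g (a.periodic_barrier A')
          (a.smooth_g.of_le (by exact_mod_cast le_top))
          ((a.contDiff_barrier A').of_le (by exact_mod_cast le_top)) hc
          (fun t ↦ hA'.barrier_mem_of_deriv_eq_zero) hA'.deriv_barrier_mul_deriv_g_nonneg
          (fun t ↦ hA'.barrier_ne_g)
    _ ≤ clusterNumber a := by
        rw [encard_coe_eq_coe_finsetCard, Nat.cast_le]
        exact hcard'.trans hcard.le

end UpperBound

/-- For a ribbon `a` with `n ≥ 4` nodes, all positive, `β(a) = δ(a)`: every extension of `a`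
attains at least `δ(a)` distinct values on its critical set in the open unit disk, and some
extension attains exactly `δ(a)` distinct critical values. -/
theorem stmt_7 (n : ℕ) (hn : 4 ≤ n) (a : Ribbon n) (hpos : ∀ i, a.ν i = 1) :
    (∀ f : E2 → ℝ, IsExtension a f →
      ((clusterNumber a : ℕ) : ℕ∞) ≤ (f '' critPts f).encard) ∧
    (∃ f : E2 → ℝ, IsExtension a f ∧
      (f '' critPts f).encard = ((clusterNumber a : ℕ) : ℕ∞)) ∧
    betaR a = ((clusterNumber a : ℕ) : ℕ∞) := by
  have hlower (f : E2 → ℝ) (hf : IsExtension a f) := hf.clusterNumber_le_encard hpos (by omega)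
  obtain ⟨f, hf, hle⟩ := exists_isExtension_encard_le hpos
  have hmin : IsLeast {k | ∃ f, IsExtension a f ∧ (f '' critPts f).encard = k} (clusterNumber a) :=
    ⟨⟨f, hf, hle.antisymm (hlower f hf)⟩, by rintro _ ⟨f, hf, rfl⟩; exact hlower f hf⟩
  exact ⟨hlower, hmin.1, hmin.isGLB.sInf_eq⟩
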